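/- (Theorem 1.1, second part: quantitative positivity for small times.) Let d ≥ 1 and 0 < m < 1. There exist positive constants c₀′ and C₁′ depending only on d and m with the following property. Let u be a classical solution of the FDE ∂ₜu = Δ(u^m) on (0,T)×Ω taking nonnegative initial data u₀ ∈ L¹_loc(Ω) and having finite extinction time T, and let x₀ ∈ Ω, R > 0 be such that the closed ball of radius 3R about x₀ is contained in Ω. Set t_* = c₀′ R^{2−d(1−m)} ‖u₀‖_{L¹(B_R(x₀))}^{1−m}. Then t_* ≤ T, and for every t ∈ (0, t_*]: u(t,x₀)^m ≥ C₁′ R^{2−d} ‖u₀‖_{L¹(B_R(x₀))} T^{−1/(1−m)} t^{m/(1−m)}. -/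

import Mathlib

open MeasureTheory Metric Set Real

/-- The spatial Laplacian of `f : ℝ^d → ℝ` at a point, as the sum of second
coordinate derivatives. -/
noncomputable def spaceLap {d : ℕ} (f : EuclideanSpace ℝ (Fin d) → ℝ)
    (x : EuclideanSpace ℝ (Fin d)) : ℝ :=
  ∑ i : Fin d, fderiv ℝ (fun y => fderiv ℝ f y (EuclideanSpace.single i 1)) x
    (EuclideanSpace.single i 1)

/-- `u` is a classical solution of the fast diffusion equation `∂ₜ u = Δ(u^m)`
on the space-time set `Q`: it is positive and smooth on `Q` and satisfies the
equation pointwise on `Q`. -/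
def IsFDESol {d : ℕ} (m : ℝ) (Q : Set (ℝ × EuclideanSpace ℝ (Fin d)))
    (u : ℝ → EuclideanSpace ℝ (Fin d) → ℝ) : Prop :=
  (∀ p ∈ Q, 0 < u p.1 p.2) ∧
  ContDiffOn ℝ (⊤ : ℕ∞) (fun p : ℝ × EuclideanSpace ℝ (Fin d) => u p.1 p.2) Q ∧
  ∀ p ∈ Q, deriv (fun s => u s p.2) p.1 = spaceLap (fun y => u p.1 y ^ m) p.2

/-- `u` (defined for `0 < t < T` on `Ω`) takes the initial data `u₀`:
it extends continuously to `{0} × Ω` with value `u₀` there. -/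
def TakesInit {d : ℕ} (T : ℝ) (Ω : Set (EuclideanSpace ℝ (Fin d)))
    (u : ℝ → EuclideanSpace ℝ (Fin d) → ℝ) (u₀ : EuclideanSpace ℝ (Fin d) → ℝ) : Prop :=
  ContinuousOn (fun p : ℝ × EuclideanSpace ℝ (Fin d) => u p.1 p.2) (Ico 0 T ×ˢ Ω) ∧
  ∀ x ∈ Ω, u 0 x = u₀ x

/-- `u` has finite extinction time `T` on `Ω`: it extends continuously to
`{T} × Ω` with value `0` there, while `u(t,·)` is not identically zero for `0 < t < T`. -/
def ExtinctAt {d : ℕ} (T : ℝ) (Ω : Set (EuclideanSpace ℝ (Fin d)))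
    (u : ℝ → EuclideanSpace ℝ (Fin d) → ℝ) : Prop :=
  ContinuousOn (fun p : ℝ × EuclideanSpace ℝ (Fin d) => u p.1 p.2) (Ioc 0 T ×ˢ Ω) ∧
  (∀ x ∈ Ω, u T x = 0) ∧
  ∀ t ∈ Ioo 0 T, ∃ x ∈ Ω, u t x ≠ 0

/-!
Put `p = 1 / (1 - m)`. If `u` solves the equation then so does `λ ^ (-p) * u (λ t)`, so the infimum
of these functions over `0 < λ ≤ 1` is a supersolution `v ≤ u` with the same initial values, and
`t ^ (-p) * v t` is nonincreasing by construction. This monotonicity replaces the Bénilan–Crandall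
estimate `∂ₜu ≤ u / ((1 - m) t)`, which is not available for local solutions. As an infimum, `v` is
only continuous, and it is compared with test functions through finite differences in time and
space.

Tested with a power of a paraboloidal cutoff, the supersolution inequality is closed up by Hölder's
inequality: half of the mass near `x₀` survives for a time comparable to `t_*`. In particular
extinction cannot take place before `t_*`. Tested on `[t, T]` with a truncated, regularised
fundamental solution centred at `x₀`, it bounds the surviving mass by
`∫ v(τ, x₀)^m dτ`, up to the mass at time `T`, which vanishes; and
`v(τ, x₀) ≤ (T / t)^p u(t, x₀)` on `[t, T]`.
-/

open Filter Topology

section Differences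

theorem sub_mul_le_of_eventually_left_difference {f : ℝ → ℝ} {a b c : ℝ} (hab : a ≤ b)
    (hc : 0 ≤ c) (hf : ContinuousOn f (Icc a b))
    (hdiff : ∀ t ∈ Ioc a b, f t ≤ f a → ∀ ε > 0, ∀ᶠ h in 𝓝[>] (0 : ℝ),
      h ≤ t - a → -(c + ε) * h ≤ f t - f (t - h)) :
    f a - c * (b - a) ≤ f b := by
  refine le_of_forall_pos_le_add fun δ hδ => ?_
  by_contra! hlt
  have hab' : a < b := hab.lt_of_ne fun h => by subst h; linarith
  obtain ⟨ε, hε, hεδ⟩ : ∃ ε > 0, ε * (b - a) = δ :=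
    ⟨δ / (b - a), div_pos hδ (sub_pos.2 hab'), div_mul_cancel₀ _ (sub_pos.2 hab').ne'⟩
  obtain ⟨t, ht, hmin⟩ := isCompact_Icc.exists_isMinOn (nonempty_Icc.2 hab)
    (f := fun t => f t + (c + ε) * (t - a)) (by fun_prop)
  rw [isMinOn_iff] at hmin
  have hta : a < t := ht.1.lt_of_ne fun h => by
    have := hmin b (right_mem_Icc.2 hab)
    subst h
    linarith
  have hft : f t ≤ f a := by
    have := hmin a (left_mem_Icc.2 hab)
    have : 0 ≤ (c + ε) * (t - a) := mul_nonneg (by linarith) (by linarith)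
    linarith
  obtain ⟨h, hh, hhpos, hhle⟩ := ((hdiff t ⟨hta, ht.2⟩ hft (ε / 2) (half_pos hε)).and
    (Ioc_mem_nhdsGT (sub_pos.2 hta))).exists
  have := hh hhle
  have := hmin (t - h) ⟨by linarith, by linarith [ht.2]⟩
  nlinarith

theorem abs_second_difference_sub_le {f f' f'' : ℝ → ℝ} {r c ε : ℝ} (hr : 0 ≤ r)
    (hf : ∀ y ∈ Icc (-r) r, HasDerivAt f (f' y) y)
    (hf' : ∀ y ∈ Icc (-r) r, HasDerivAt f' (f'' y) y)
    (hf'' : ∀ y ∈ Icc (-r) r, |f'' y - c| ≤ ε) :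
    |f r + f (-r) - 2 * f 0 - r ^ 2 * c| ≤ 2 * ε * r ^ 2 := by
  have hε : 0 ≤ ε := (abs_nonneg _).trans (hf'' 0 ⟨by linarith, hr⟩)
  have odd_part_le : ∀ y ∈ Icc 0 r, ‖f' y - f' (-y) - 2 * y * c‖ ≤ 2 * ε * r := by
    intro y hy
    have := (convex_Icc (-r) r).norm_image_sub_le_of_norm_hasDerivWithin_le
      (f := fun y => f' y - c * y) (f' := fun y => f'' y - c)
      (fun x hx => by
        simpa using ((hf' x hx).fun_sub ((hasDerivAt_id x).const_mul c)).hasDerivWithinAt)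
      hf'' (show -y ∈ Icc (-r) r from ⟨by linarith [hy.2], by linarith [hy.1]⟩)
      (show y ∈ Icc (-r) r from ⟨by linarith [hy.1], by linarith [hy.2]⟩)
    calc ‖f' y - f' (-y) - 2 * y * c‖ = ‖f' y - c * y - (f' (-y) - c * -y)‖ := by ring_nf
      _ ≤ ε * ‖y - -y‖ := this
      _ = 2 * ε * y := by
        rw [Real.norm_of_nonneg (by linarith [hy.1])]
        ring
      _ ≤ 2 * ε * r := by gcongr; exact hy.2
  have := (convex_Icc 0 r).norm_image_sub_le_of_norm_hasDerivWithin_le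
    (f := fun y => f y + f (-y) - c * y ^ 2) (f' := fun y => f' y - f' (-y) - 2 * y * c)
    (fun x hx => by
      have hpos := hf x ⟨by linarith [hx.1], hx.2⟩
      have hneg := (hf (-x) ⟨by linarith [hx.2], by linarith [hx.1]⟩).scomp x (hasDerivAt_neg x)
      refine ((hpos.add hneg).sub ((hasDerivAt_pow 2 x).const_mul c)).hasDerivWithinAt.congr_deriv
        ?_
      simp only [smul_eq_mul]
      push_cast
      ring)
    odd_part_le (left_mem_Icc.2 hr) (right_mem_Icc.2 hr)
  calc |f r + f (-r) - 2 * f 0 - r ^ 2 * c|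
      = ‖f r + f (-r) - c * r ^ 2 - (f 0 + f (-0) - c * 0 ^ 2)‖ := by
        rw [neg_zero, Real.norm_eq_abs]
        ring_nf
    _ ≤ 2 * ε * r * ‖r - 0‖ := this
    _ = 2 * ε * r ^ 2 := by
        rw [sub_zero, Real.norm_of_nonneg hr]
        ring

variable {X : Type*} [NormedAddCommGroup X] [NormedSpace ℝ X] {Q C : Set X} {e : X}
  {F G H : X → ℝ} {ε : ℝ}

theorem eventually_dist_add_smul_lt (e : X) (hε : 0 < ε) :
    ∀ᶠ r in 𝓝[>] (0 : ℝ), ∀ p : X, ∀ y ∈ Icc (-r) r, dist (p + y • e) p < ε := by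
  have hlim : Tendsto (fun r : ℝ => r * ‖e‖) (𝓝[>] 0) (𝓝 (0 * ‖e‖)) :=
    (tendsto_id.mul_const _).mono_left nhdsWithin_le_nhds
  rw [zero_mul] at hlim
  filter_upwards [hlim.eventually_lt_const hε] with r hr p y hy
  rw [dist_self_add_left, norm_smul, Real.norm_eq_abs]
  exact (mul_le_mul_of_nonneg_right (abs_le.2 hy) (norm_nonneg e)).trans_lt hr

theorem eventually_add_smul_mem (hQ : IsOpen Q) (hC : IsCompact C) (hCQ : C ⊆ Q) (e : X) :
    ∀ᶠ r in 𝓝[>] (0 : ℝ), ∀ p ∈ C, ∀ y ∈ Icc (-r) r, p + y • e ∈ Q := by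
  obtain ⟨δ, hδ, hδQ⟩ := hC.exists_thickening_subset_open hQ hCQ
  filter_upwards [eventually_dist_add_smul_lt e hδ] with r hr p hp y hy
  exact hδQ (mem_thickening_iff.2 ⟨p, hp, hr p y hy⟩)

theorem eventually_abs_add_smul_sub_le (hC : IsCompact C) (hH : ∀ p ∈ C, ContinuousAt H p)
    (hε : 0 < ε) (e : X) :
    ∀ᶠ r in 𝓝[>] (0 : ℝ), ∀ p ∈ C, ∀ y ∈ Icc (-r) r, |H (p + y • e) - H p| ≤ ε := by
  obtain ⟨δ, hδ, hδH⟩ := Metric.mem_uniformity_dist.1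
    (hC.uniformContinuousAt_of_continuousAt H hH (Metric.dist_mem_uniformity hε))
  filter_upwards [eventually_dist_add_smul_lt e hδ] with r hr p hp y hy
  have := hδH ((dist_comm _ _).trans_lt (hr p y hy)) hp
  rw [mem_ofPred_eq, dist_comm, Real.dist_eq] at this
  exact this.le

theorem hasDerivAt_of_hasLineDerivAt_add_smul {g : ℝ} {p : X} {y : ℝ}
    (h : HasLineDerivAt ℝ F g (p + y • e) e) : HasDerivAt (fun r : ℝ => F (p + r • e)) g y := by
  have h' : HasDerivAt (fun r : ℝ => F (p + y • e + r • e)) g (y - y) := by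
    simpa [HasLineDerivAt] using h
  refine (h'.comp_sub_const y y).congr_of_eventuallyEq (.of_forall fun r => ?_)
  simp only [add_assoc, ← add_smul, add_sub_cancel]

theorem eventually_abs_second_difference_sub_le (hQ : IsOpen Q) (hC : IsCompact C) (hCQ : C ⊆ Q)
    (hF : ∀ p ∈ Q, HasLineDerivAt ℝ F (G p) p e) (hG : ∀ p ∈ Q, HasLineDerivAt ℝ G (H p) p e)
    (hH : ContinuousOn H Q) (hε : 0 < ε) :
    ∀ᶠ r in 𝓝[>] (0 : ℝ), ∀ p ∈ C,
      |F (p + r • e) + F (p - r • e) - 2 * F p - r ^ 2 * H p| ≤ ε * r ^ 2 := by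
  have hHC : ∀ p ∈ C, ContinuousAt H p := fun p hp => hH.continuousAt (hQ.mem_nhds (hCQ hp))
  filter_upwards [eventually_add_smul_mem hQ hC hCQ e,
    eventually_abs_add_smul_sub_le hC hHC (half_pos hε) e, self_mem_nhdsWithin]
    with r hrQ hrH hr0 p hp
  have := abs_second_difference_sub_le (mem_Ioi.1 hr0).le
    (fun y hy => hasDerivAt_of_hasLineDerivAt_add_smul (hF _ (hrQ p hp y hy)))
    (fun y hy => hasDerivAt_of_hasLineDerivAt_add_smul (hG _ (hrQ p hp y hy)))
    (hrH p hp)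
  simpa only [neg_smul, zero_smul, add_zero, ← sub_eq_add_neg, mul_div_cancel₀ ε two_ne_zero]
    using this

theorem eventually_abs_left_difference_sub_le (hQ : IsOpen Q) (hC : IsCompact C) (hCQ : C ⊆ Q)
    (hF : ∀ p ∈ Q, HasLineDerivAt ℝ F (G p) p e) (hG : ContinuousOn G Q) (hε : 0 < ε) :
    ∀ᶠ h in 𝓝[>] (0 : ℝ), ∀ p ∈ C, |F p - F (p - h • e) - h * G p| ≤ ε * h := by
  have hGC : ∀ p ∈ C, ContinuousAt G p := fun p hp => hG.continuousAt (hQ.mem_nhds (hCQ hp))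
  filter_upwards [eventually_add_smul_mem hQ hC hCQ e,
    eventually_abs_add_smul_sub_le hC hGC hε e, self_mem_nhdsWithin] with h hhQ hhG hh0 p hp
  have hh0 : 0 < h := hh0
  have := (convex_Icc (-h) h).norm_image_sub_le_of_norm_hasDerivWithin_le
    (f := fun y => F (p + y • e) - G p * y) (f' := fun y => G (p + y • e) - G p)
    (fun y hy => by
      simpa using ((hasDerivAt_of_hasLineDerivAt_add_smul (hF _ (hhQ p hp y hy))).fun_sub
        ((hasDerivAt_id y).const_mul (G p))).hasDerivWithinAt)
    (hhG p hp)
    (show -h ∈ Icc (-h) h from ⟨le_rfl, by linarith⟩)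
    (show (0 : ℝ) ∈ Icc (-h) h from ⟨by linarith, hh0.le⟩)
  simp only [neg_smul, zero_smul, add_zero, ← sub_eq_add_neg, mul_zero, sub_zero, sub_neg_eq_add,
    zero_add, Real.norm_of_nonneg hh0.le, Real.norm_eq_abs] at this
  convert this using 2
  ring

end Differences

section FastDiffusion

variable {d : ℕ}

/-- The centred finite-difference Laplacian of step `r`, the sum of the second difference quotients
along the coordinate axes. Supersolutions that need not be differentiable are tested through it. -/
noncomputable def discreteLaplacian (r : ℝ) (f : EuclideanSpace ℝ (Fin d) → ℝ)
    (x : EuclideanSpace ℝ (Fin d)) : ℝ :=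
  (∑ i, (f (x + r • EuclideanSpace.single i 1) + f (x - r • EuclideanSpace.single i 1) - 2 * f x))
    / r ^ 2

theorem eventually_abs_discreteLaplacian_sub_le {Y : Type*} [NormedAddCommGroup Y]
    [NormedSpace ℝ Y] {Q C : Set (Y × EuclideanSpace ℝ (Fin d))}
    {F : Y × EuclideanSpace ℝ (Fin d) → ℝ} {G H : Fin d → Y × EuclideanSpace ℝ (Fin d) → ℝ} {ε : ℝ}
    (hQ : IsOpen Q) (hC : IsCompact C) (hCQ : C ⊆ Q)
    (hF : ∀ i, ∀ p ∈ Q, HasLineDerivAt ℝ F (G i p) p (0, EuclideanSpace.single i 1))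
    (hG : ∀ i, ∀ p ∈ Q, HasLineDerivAt ℝ (G i) (H i p) p (0, EuclideanSpace.single i 1))
    (hH : ∀ i, ContinuousOn (H i) Q) (hε : 0 < ε) :
    ∀ᶠ r in 𝓝[>] (0 : ℝ), ∀ p ∈ C,
      |discreteLaplacian r (fun y => F (p.1, y)) p.2 - ∑ i, H i p| ≤ ε := by
  have hdε : (d : ℝ) * (ε / (d + 1)) ≤ ε := by
    rw [← mul_div_assoc, div_le_iff₀ (by positivity)]
    nlinarith
  filter_upwards [eventually_all.2 fun i => eventually_abs_second_difference_sub_le hQ hC hCQ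
    (hF i) (hG i) (hH i) (show 0 < ε / (d + 1) by positivity), self_mem_nhdsWithin]
    with r hr hr0 p hp
  have hr2 : 0 < r ^ 2 := pow_pos hr0 2
  have hsum : discreteLaplacian r (fun y => F (p.1, y)) p.2 - ∑ i, H i p =
      (∑ i, (F (p + r • (0, EuclideanSpace.single i 1)) + F (p - r • (0, EuclideanSpace.single i 1))
        - 2 * F p - r ^ 2 * H i p)) / r ^ 2 := by
    rw [discreteLaplacian, Finset.sum_sub_distrib (g := fun i => r ^ 2 * H i p), ← Finset.mul_sum,
      sub_div _ (r ^ 2 * _), mul_div_cancel_left₀ _ hr2.ne']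
    simp only [Prod.smul_mk, smul_zero, Prod.add_def, Prod.sub_def, add_zero, sub_zero]
  rw [hsum, abs_div, abs_of_pos hr2, div_le_iff₀ hr2]
  calc |∑ i, (F (p + r • (0, EuclideanSpace.single i 1)) +
        F (p - r • (0, EuclideanSpace.single i 1)) - 2 * F p - r ^ 2 * H i p)|
      ≤ ∑ _i : Fin d, ε / (d + 1) * r ^ 2 :=
        (Finset.abs_sum_le_sum_abs _ _).trans (Finset.sum_le_sum fun i _ => hr i p hp)
    _ = d * (ε / (d + 1)) * r ^ 2 := by
        rw [Finset.sum_const, Finset.card_univ, Fintype.card_fin, nsmul_eq_mul, mul_assoc]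
    _ ≤ ε * r ^ 2 := by gcongr

theorem fderiv_slice_apply {X Y : Type*} [NormedAddCommGroup X] [NormedSpace ℝ X]
    [NormedAddCommGroup Y] [NormedSpace ℝ Y] {g : Y × X → ℝ} {p : Y × X}
    (hg : DifferentiableAt ℝ g p) (e : X) :
    fderiv ℝ (fun x => g (p.1, x)) p.2 e = fderiv ℝ g p (0, e) := by
  have h : HasFDerivAt (fun x => g (p.1, x)) _ p.2 :=
    hg.hasFDerivAt.comp p.2 (hasFDerivAt_prodMk_right p.1 p.2)
  rw [h.fderiv]
  simp

section Smooth

variable {X : Type*} [NormedAddCommGroup X] [NormedSpace ℝ X] {F : X → ℝ} {Q : Set X}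

theorem hasLineDerivAt_fderiv_of_contDiffOn (hQ : IsOpen Q) (hF : ContDiffOn ℝ (⊤ : ℕ∞) F Q)
    (e : X) : ∀ p ∈ Q, HasLineDerivAt ℝ F (fderiv ℝ F p e) p e := fun p hp =>
  (((hF.contDiffAt (hQ.mem_nhds hp)).differentiableAt (by simp)).hasFDerivAt).hasLineDerivAt e

theorem contDiffOn_fderiv_apply_const (hQ : IsOpen Q) (hF : ContDiffOn ℝ (⊤ : ℕ∞) F Q) (e : X) :
    ContDiffOn ℝ (⊤ : ℕ∞) (fun p => fderiv ℝ F p e) Q :=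
  (hF.fderiv_of_isOpen hQ (by simp)).clm_apply contDiffOn_const

end Smooth

section ClassicalSolution

variable {m ε : ℝ} {Q C : Set (ℝ × EuclideanSpace ℝ (Fin d))} {u : ℝ → EuclideanSpace ℝ (Fin d) → ℝ}

theorem IsFDESol.contDiffOn_rpow (hu : IsFDESol m Q u) :
    ContDiffOn ℝ (⊤ : ℕ∞) (fun p : ℝ × EuclideanSpace ℝ (Fin d) => u p.1 p.2 ^ m) Q :=
  hu.2.1.rpow_const_of_ne fun p hp => (hu.1 p hp).ne'

theorem IsFDESol.deriv_eq_sum_fderiv_fderiv (hQ : IsOpen Q) (hu : IsFDESol m Q u)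
    {p : ℝ × EuclideanSpace ℝ (Fin d)} (hp : p ∈ Q) :
    deriv (fun s => u s p.2) p.1 =
      ∑ i, fderiv ℝ (fun q => fderiv ℝ (fun q : ℝ × EuclideanSpace ℝ (Fin d) => u q.1 q.2 ^ m) q
        (0, EuclideanSpace.single i 1)) p (0, EuclideanSpace.single i 1) := by
  have differentiableAt_of : ∀ {g : ℝ × EuclideanSpace ℝ (Fin d) → ℝ}, ContDiffOn ℝ (⊤ : ℕ∞) g Q →
      ∀ q ∈ Q, DifferentiableAt ℝ g q := fun hg q hq =>
    (hg.contDiffAt (hQ.mem_nhds hq)).differentiableAt (by simp)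
  rw [hu.2.2 p hp, spaceLap]
  refine Finset.sum_congr rfl fun i _ => ?_
  rw [← fderiv_slice_apply (differentiableAt_of
    (contDiffOn_fderiv_apply_const hQ hu.contDiffOn_rpow _) p hp)]
  congr 1
  refine EventuallyEq.fderiv_eq ?_
  have hslice : ∀ᶠ y in 𝓝 p.2, (p.1, y) ∈ Q :=
    (Continuous.prodMk_right p.1).continuousAt.eventually_mem (hQ.mem_nhds hp)
  filter_upwards [hslice] with y hy
  exact fderiv_slice_apply (p := (p.1, y)) (differentiableAt_of hu.contDiffOn_rpow _ hy) _

theorem IsFDESol.eventually_discreteLaplacian_le (hQ : IsOpen Q) (hu : IsFDESol m Q u)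
    (hC : IsCompact C) (hCQ : C ⊆ Q) (hε : 0 < ε) :
    ∀ᶠ r in 𝓝[>] (0 : ℝ), ∀ p ∈ C,
      discreteLaplacian r (fun y => u p.1 y ^ m) p.2 ≤ deriv (fun s => u s p.2) p.1 + ε := by
  have hG := contDiffOn_fderiv_apply_const hQ hu.contDiffOn_rpow
  filter_upwards [eventually_abs_discreteLaplacian_sub_le hQ hC hCQ
    (fun i => hasLineDerivAt_fderiv_of_contDiffOn hQ hu.contDiffOn_rpow _)
    (fun i => hasLineDerivAt_fderiv_of_contDiffOn hQ (hG _) _)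
    (fun i => (contDiffOn_fderiv_apply_const hQ (hG _) _).continuousOn) hε] with r hr p hp
  rw [hu.deriv_eq_sum_fderiv_fderiv hQ (hCQ hp)]
  linarith [(abs_le.1 (hr p hp)).2]

theorem IsFDESol.eventually_mul_deriv_sub_le (hQ : IsOpen Q) (hu : IsFDESol m Q u)
    (hC : IsCompact C) (hCQ : C ⊆ Q) (hε : 0 < ε) :
    ∀ᶠ h in 𝓝[>] (0 : ℝ), ∀ p ∈ C,
      h * (deriv (fun s => u s p.2) p.1 - ε) ≤ u p.1 p.2 - u (p.1 - h) p.2 := by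
  have htime := hasLineDerivAt_fderiv_of_contDiffOn hQ hu.2.1 (1, 0)
  filter_upwards [eventually_abs_left_difference_sub_le hQ hC hCQ htime
    (contDiffOn_fderiv_apply_const hQ hu.2.1 _).continuousOn hε] with h hh p hp
  have hderiv : HasDerivAt (fun s => u s p.2)
      (fderiv ℝ (fun q : ℝ × EuclideanSpace ℝ (Fin d) => u q.1 q.2) p (1, 0)) p.1 := by
    simpa using hasDerivAt_of_hasLineDerivAt_add_smul (p := ((0 : ℝ), p.2)) (y := p.1)
      (e := (1, 0)) (by simpa using htime p (hCQ hp))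
  have := (abs_le.1 (hh p hp)).1
  simp only [Prod.fst_sub, Prod.snd_sub, Prod.smul_mk, smul_eq_mul, mul_one, smul_zero, sub_zero]
    at this
  rw [hderiv.deriv]
  linarith

theorem IsFDESol.comp_add_left (hu : IsFDESol m Q u) (s : ℝ) :
    IsFDESol m ((fun p : ℝ × EuclideanSpace ℝ (Fin d) => (s + p.1, p.2)) ⁻¹' Q)
      (fun t => u (s + t)) :=
  ⟨fun p hp => hu.1 _ hp,
    hu.2.1.comp (f := fun p : ℝ × EuclideanSpace ℝ (Fin d) => (s + p.1, p.2))
      (ContDiff.contDiffOn (by fun_prop)) fun _ hp => hp,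
    fun p hp => (deriv_comp_const_add (fun s => u s p.2) s p.1).trans (hu.2.2 _ hp)⟩

end ClassicalSolution

section TimeEnvelope

variable {X : Type*} {p T t l : ℝ} {w : ℝ → X → ℝ} {K : Set X} {x : X}

/-- The largest function below all the time rescalings `l ^ (-p) * w (l * t) x` with `0 < l ≤ 1`.
For `p = 1 / (1 - m)` each rescaling preserves the fast diffusion equation, so the envelope of a
solution is a supersolution; by construction `t ^ (-p) * timeEnvelope p w t x` is nonincreasing
in `t`. -/
noncomputable def timeEnvelope (p : ℝ) (w : ℝ → X → ℝ) (t : ℝ) (x : X) : ℝ :=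
  ⨅ l : Ioc (0 : ℝ) 1, (l : ℝ) ^ (-p) * w (l * t) x

theorem mul_mem_Icc_of_mem_Ioc (ht : t ∈ Icc 0 T) (hl : l ∈ Ioc (0 : ℝ) 1) : l * t ∈ Icc 0 T :=
  ⟨mul_nonneg hl.1.le ht.1, (mul_le_of_le_one_left ht.1 hl.2).trans ht.2⟩

theorem timeEnvelope_le (hw : ∀ t ∈ Icc 0 T, ∀ x ∈ K, 0 < w t x) (ht : t ∈ Icc 0 T) (hx : x ∈ K)
    (hl : l ∈ Ioc (0 : ℝ) 1) : timeEnvelope p w t x ≤ l ^ (-p) * w (l * t) x := by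
  refine ciInf_le (f := fun l : Ioc (0 : ℝ) 1 => (l : ℝ) ^ (-p) * w (l * t) x) ⟨0, ?_⟩ ⟨l, hl⟩
  rintro _ ⟨k, rfl⟩
  exact mul_nonneg (rpow_nonneg k.2.1.le _) (hw _ (mul_mem_Icc_of_mem_Ioc ht k.2) x hx).le

theorem timeEnvelope_zero (hp : 0 < p) (hx : 0 ≤ w 0 x) : timeEnvelope p w 0 x = w 0 x := by
  have : Nonempty (Ioc (0 : ℝ) 1) := ⟨⟨1, one_pos, le_rfl⟩⟩
  simp only [timeEnvelope, mul_zero]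
  refine le_antisymm ?_ (le_ciInf fun l => le_mul_of_one_le_left hx
    (one_le_rpow_of_pos_of_le_one_of_nonpos l.2.1 l.2.2 (by linarith)))
  refine (ciInf_le ⟨0, ?_⟩ ⟨1, one_pos, le_rfl⟩).trans_eq (by rw [one_rpow, one_mul])
  rintro _ ⟨l, rfl⟩
  exact mul_nonneg (rpow_nonneg l.2.1.le _) hx

theorem timeEnvelope_le_rpow_div_mul {s : ℝ} (hw : ∀ t ∈ Icc 0 T, ∀ x ∈ K, 0 < w t x) (hx : x ∈ K)
    (hs : 0 < s) (hst : s ≤ t) (htT : t ≤ T) :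
    timeEnvelope p w t x ≤ (t / s) ^ p * w s x := by
  have ht : 0 < t := hs.trans_le hst
  have := timeEnvelope_le (p := p) hw ⟨ht.le, htT⟩ hx ⟨div_pos hs ht, (div_le_one ht).2 hst⟩
  rwa [div_mul_cancel₀ s ht.ne', rpow_neg (by positivity), ← inv_rpow (by positivity),
    inv_div] at this

variable [TopologicalSpace X]

theorem exists_forall_le_rescale (hK : IsCompact K) (hp : 0 < p)
    (hw : ∀ t ∈ Icc 0 T, ∀ x ∈ K, 0 < w t x)
    (hwc : ContinuousOn (fun q : ℝ × X => w q.1 q.2) (Icc 0 T ×ˢ K)) :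
    ∃ l₀ ∈ Ioc (0 : ℝ) 1, ∀ t ∈ Icc 0 T, ∀ x ∈ K, ∀ l ∈ Ioc 0 l₀,
      w t x ≤ l ^ (-p) * w (l * t) x := by
  have hcomp : IsCompact (Icc 0 T ×ˢ K) := isCompact_Icc.prod hK
  obtain ⟨δ, hδ, hδw⟩ := hcomp.exists_forall_le' hwc (a := 0) fun q hq => hw _ hq.1 _ hq.2
  obtain ⟨M, hM⟩ := hcomp.exists_bound_of_continuousOn hwc
  have hmax : 0 < max δ M := lt_max_of_lt_left hδ
  have hratio : 0 < δ / max δ M := div_pos hδ hmax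
  have hl₀ : (δ / max δ M) ^ (1 / p) ∈ Ioc (0 : ℝ) 1 :=
    ⟨rpow_pos_of_pos hratio _, rpow_le_one hratio.le
      ((div_le_one hmax).2 (le_max_left _ _)) (by positivity)⟩
  refine ⟨_, hl₀, fun t ht x hx l hl => ?_⟩
  have hlt := mul_mem_Icc_of_mem_Ioc ht ⟨hl.1, hl.2.trans hl₀.2⟩
  calc w t x ≤ max δ M := (le_abs_self _).trans ((hM (t, x) ⟨ht, hx⟩).trans (le_max_right _ _))
    _ = ((δ / max δ M) ^ (1 / p)) ^ (-p) * δ := by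
      rw [← rpow_mul hratio.le, mul_neg, one_div_mul_cancel hp.ne', rpow_neg_one]
      field_simp
    _ ≤ l ^ (-p) * w (l * t) x :=
      mul_le_mul (rpow_le_rpow_of_nonpos hl.1 hl.2 (by linarith)) (hδw (l * t, x) ⟨hlt, hx⟩) hδ.le
        (rpow_nonneg hl.1.le _)

theorem exists_timeEnvelope_eq_iInf_Icc (hK : IsCompact K) (hp : 0 < p)
    (hw : ∀ t ∈ Icc 0 T, ∀ x ∈ K, 0 < w t x)
    (hwc : ContinuousOn (fun q : ℝ × X => w q.1 q.2) (Icc 0 T ×ˢ K)) :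
    ∃ l₀ ∈ Ioc (0 : ℝ) 1, ∀ t ∈ Icc 0 T, ∀ x ∈ K,
      timeEnvelope p w t x = ⨅ l : Icc l₀ 1, (l : ℝ) ^ (-p) * w (l * t) x := by
  obtain ⟨l₀, hl₀, hle⟩ := exists_forall_le_rescale hK hp hw hwc
  refine ⟨l₀, hl₀, fun t ht x hx => le_antisymm ?_ ?_⟩
  · have : Nonempty (Icc l₀ 1) := ⟨⟨1, hl₀.2, le_rfl⟩⟩
    exact le_ciInf fun l => timeEnvelope_le hw ht hx ⟨hl₀.1.trans_le l.2.1, l.2.2⟩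
  have hbdd : BddBelow (range fun l : Icc l₀ 1 => (l : ℝ) ^ (-p) * w (l * t) x) := by
    refine ⟨0, ?_⟩
    rintro _ ⟨l, rfl⟩
    have hl : (l : ℝ) ∈ Ioc (0 : ℝ) 1 := ⟨hl₀.1.trans_le l.2.1, l.2.2⟩
    exact mul_nonneg (rpow_nonneg hl.1.le _) (hw _ (mul_mem_Icc_of_mem_Ioc ht hl) x hx).le
  have : Nonempty (Ioc (0 : ℝ) 1) := ⟨⟨1, one_pos, le_rfl⟩⟩
  refine le_ciInf fun l => ?_
  rcases le_total l₀ l with hl | hl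
  · exact ciInf_le hbdd ⟨l, hl, l.2.2⟩
  · refine (ciInf_le hbdd ⟨1, hl₀.2, le_rfl⟩).trans ?_
    simpa only [one_rpow, one_mul] using hle t ht x hx l ⟨l.2.1, hl⟩

theorem continuous_rescale {l₀ : ℝ} (hl₀ : 0 < l₀)
    (hwc : ContinuousOn (fun q : ℝ × X => w q.1 q.2) (Icc 0 T ×ˢ K)) :
    Continuous fun z : ↥(Icc 0 T ×ˢ K) × Icc l₀ 1 =>
      (z.2 : ℝ) ^ (-p) * w (z.2 * z.1.1.1) z.1.1.2 := by
  refine Continuous.mul (Continuous.rpow_const (by fun_prop) fun z =>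
    Or.inl (hl₀.trans_le z.2.2.1).ne') ?_
  exact hwc.comp_continuous
    (f := fun z : ↥(Icc 0 T ×ˢ K) × Icc l₀ 1 => ((z.2 : ℝ) * z.1.1.1, z.1.1.2)) (by fun_prop)
    fun z => ⟨mul_mem_Icc_of_mem_Ioc z.1.2.1 ⟨hl₀.trans_le z.2.2.1, z.2.2.2⟩, z.1.2.2⟩

theorem exists_timeEnvelope_eq_rescale (hK : IsCompact K) (hp : 0 < p)
    (hw : ∀ t ∈ Icc 0 T, ∀ x ∈ K, 0 < w t x)
    (hwc : ContinuousOn (fun q : ℝ × X => w q.1 q.2) (Icc 0 T ×ˢ K)) :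
    ∃ l₀ ∈ Ioc (0 : ℝ) 1, ∀ t ∈ Icc 0 T, ∀ x ∈ K, ∃ l ∈ Icc l₀ 1,
      timeEnvelope p w t x = l ^ (-p) * w (l * t) x := by
  obtain ⟨l₀, hl₀, heq⟩ := exists_timeEnvelope_eq_iInf_Icc hK hp hw hwc
  refine ⟨l₀, hl₀, fun t ht x hx => ?_⟩
  have : Nonempty (Icc l₀ 1) := ⟨⟨1, hl₀.2, le_rfl⟩⟩
  obtain ⟨l, -, hl⟩ := isCompact_univ.exists_sInf_image_eq univ_nonempty
    ((continuous_rescale hl₀.1 hwc).comp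
      (Continuous.prodMk_right ⟨(t, x), ht, hx⟩) : Continuous _).continuousOn
  refine ⟨l, l.2, (heq t ht x hx).trans ?_⟩
  rw [image_univ] at hl
  exact hl

theorem continuousOn_timeEnvelope (hK : IsCompact K) (hp : 0 < p)
    (hw : ∀ t ∈ Icc 0 T, ∀ x ∈ K, 0 < w t x)
    (hwc : ContinuousOn (fun q : ℝ × X => w q.1 q.2) (Icc 0 T ×ˢ K)) :
    ContinuousOn (fun q : ℝ × X => timeEnvelope p w q.1 q.2) (Icc 0 T ×ˢ K) := by
  obtain ⟨l₀, hl₀, heq⟩ := exists_timeEnvelope_eq_iInf_Icc hK hp hw hwc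
  rw [continuousOn_iff_continuous_domRestrict]
  refine (isCompact_univ.continuous_sInf
    (f := fun (q : ↥(Icc 0 T ×ˢ K)) (l : Icc l₀ 1) => (l : ℝ) ^ (-p) * w (l * q.1.1) q.1.2)
    (continuous_rescale hl₀.1 hwc)).congr fun q => ?_
  rw [image_univ]
  exact (heq q.1.1 q.2.1 q.1.2 q.2.2).symm

theorem timeEnvelope_pos (hK : IsCompact K) (hp : 0 < p)
    (hw : ∀ t ∈ Icc 0 T, ∀ x ∈ K, 0 < w t x)
    (hwc : ContinuousOn (fun q : ℝ × X => w q.1 q.2) (Icc 0 T ×ˢ K)) (ht : t ∈ Icc 0 T)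
    (hx : x ∈ K) : 0 < timeEnvelope p w t x := by
  obtain ⟨l₀, hl₀, hatt⟩ := exists_timeEnvelope_eq_rescale hK hp hw hwc
  obtain ⟨l, hl, heq⟩ := hatt t ht x hx
  have hl0 : 0 < l := hl₀.1.trans_le hl.1
  rw [heq]
  exact mul_pos (rpow_pos_of_pos hl0 _) (hw _ (mul_mem_Icc_of_mem_Ioc ht ⟨hl0, hl.2⟩) x hx)

end TimeEnvelope

section Supersolution

variable {m T r c : ℝ} {K : Set (EuclideanSpace ℝ (Fin d))} {f g : EuclideanSpace ℝ (Fin d) → ℝ}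
  {x : EuclideanSpace ℝ (Fin d)}

theorem discreteLaplacian_const_mul (r c : ℝ) (f : EuclideanSpace ℝ (Fin d) → ℝ)
    (x : EuclideanSpace ℝ (Fin d)) :
    discreteLaplacian r (fun y => c * f y) x = c * discreteLaplacian r f x := by
  rw [discreteLaplacian, discreteLaplacian, ← mul_div_assoc, Finset.mul_sum]
  congr 1
  exact Finset.sum_congr rfl fun i _ => by ring

theorem discreteLaplacian_le_of_touching (hx : f x = g x)
    (hadd : ∀ i, f (x + r • EuclideanSpace.single i 1) ≤ g (x + r • EuclideanSpace.single i 1))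
    (hsub : ∀ i, f (x - r • EuclideanSpace.single i 1) ≤ g (x - r • EuclideanSpace.single i 1)) :
    discreteLaplacian r f x ≤ discreteLaplacian r g x := by
  unfold discreteLaplacian
  gcongr with i
  · exact hadd i
  · exact hsub i
  · exact hx.ge

/-- Positive continuous supersolutions of `∂ₜ v = Δ (v ^ m)` on `[0, T] × K`, in a sense that makes
no differentiability assumption: the backward time difference dominates the discrete Laplacian of
`v ^ m` up to an error that is uniform on compact subsets of the interior of `K` and vanishes when
the time step and then the space step tend to zero. -/
structure IsSupersol (m T : ℝ) (K : Set (EuclideanSpace ℝ (Fin d)))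
    (v : ℝ → EuclideanSpace ℝ (Fin d) → ℝ) : Prop where
  pos : ∀ t ∈ Icc 0 T, ∀ x ∈ K, 0 < v t x
  continuousOn : ContinuousOn (fun q : ℝ × EuclideanSpace ℝ (Fin d) => v q.1 q.2) (Icc 0 T ×ˢ K)
  eventually_le_sub : ∀ K' ⊆ interior K, IsCompact K' → ∀ ε > 0,
    ∀ᶠ r in 𝓝[>] (0 : ℝ), ∀ᶠ h in 𝓝[>] (0 : ℝ), ∀ t ∈ Icc h T, ∀ x ∈ K',
      h * (discreteLaplacian r (fun y => v t y ^ m) x - ε) ≤ v t x - v (t - h) x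

theorem eventually_add_sub_single_mem {Q C : Set (EuclideanSpace ℝ (Fin d))} (hQ : IsOpen Q)
    (hC : IsCompact C) (hCQ : C ⊆ Q) :
    ∀ᶠ r in 𝓝[>] (0 : ℝ), ∀ x ∈ C, ∀ i,
      x + r • EuclideanSpace.single i 1 ∈ Q ∧ x - r • EuclideanSpace.single i 1 ∈ Q := by
  filter_upwards [eventually_all.2 fun i => eventually_add_smul_mem hQ hC hCQ
    (EuclideanSpace.single i 1), self_mem_nhdsWithin] with r hr
    (hr0 : 0 < r) x hx i
  refine ⟨hr i x hx r ⟨by linarith, le_rfl⟩, ?_⟩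
  rw [sub_eq_add_neg, ← neg_smul]
  exact hr i x hx (-r) ⟨le_rfl, by linarith⟩

theorem rpow_neg_one_div_mul_self {l : ℝ} (hm1 : m < 1) (hl : 0 < l) :
    l ^ (-(1 / (1 - m))) * l = (l ^ (-(1 / (1 - m)))) ^ m := by
  have h1m : 1 - m ≠ 0 := by linarith
  rw [← rpow_add_one hl.ne', ← rpow_mul hl.le]
  congr 1
  field_simp
  ring

theorem discreteLaplacian_timeEnvelope_rpow_le {p t l : ℝ} {u : ℝ → EuclideanSpace ℝ (Fin d) → ℝ}
    (hm0 : 0 ≤ m) (hp : 0 < p) (hK : IsCompact K) (hu : ∀ t ∈ Icc 0 T, ∀ x ∈ K, 0 < u t x)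
    (huc : ContinuousOn (fun q : ℝ × EuclideanSpace ℝ (Fin d) => u q.1 q.2) (Icc 0 T ×ˢ K))
    (ht : t ∈ Icc 0 T) (hl : l ∈ Ioc (0 : ℝ) 1) (hx : x ∈ K)
    (hxl : timeEnvelope p u t x = l ^ (-p) * u (l * t) x)
    (hxK : ∀ i, x + r • EuclideanSpace.single i 1 ∈ K ∧ x - r • EuclideanSpace.single i 1 ∈ K) :
    discreteLaplacian r (fun y => timeEnvelope p u t y ^ m) x ≤
      (l ^ (-p)) ^ m * discreteLaplacian r (fun y => u (l * t) y ^ m) x := by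
  have hmul : ∀ y ∈ K, (l ^ (-p) * u (l * t) y) ^ m = (l ^ (-p)) ^ m * u (l * t) y ^ m :=
    fun y hy => mul_rpow (rpow_nonneg hl.1.le _) (hu _ (mul_mem_Icc_of_mem_Ioc ht hl) y hy).le
  have hle : ∀ y ∈ K, timeEnvelope p u t y ^ m ≤ (l ^ (-p)) ^ m * u (l * t) y ^ m := fun y hy => by
    rw [← hmul y hy]
    exact rpow_le_rpow (timeEnvelope_pos hK hp hu huc ht hy).le (timeEnvelope_le hu ht hy hl) hm0
  rw [← discreteLaplacian_const_mul]
  exact discreteLaplacian_le_of_touching (by rw [hxl, hmul x hx]) (fun i => hle _ (hxK i).1)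
    (fun i => hle _ (hxK i).2)

theorem mul_discreteLaplacian_timeEnvelope_sub_le {p t l h D η : ℝ}
    {u : ℝ → EuclideanSpace ℝ (Fin d) → ℝ} (hm1 : m < 1) (hpm : p = 1 / (1 - m))
    (hu : ∀ t ∈ Icc 0 T, ∀ x ∈ K, 0 < u t x) (hh : 0 ≤ h) (ht : t ∈ Icc h T)
    (hl : l ∈ Ioc (0 : ℝ) 1) (hx : x ∈ K) (hxl : timeEnvelope p u t x = l ^ (-p) * u (l * t) x)
    (hspace : discreteLaplacian r (fun y => timeEnvelope p u t y ^ m) x ≤ (l ^ (-p)) ^ m * (D + η))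
    (htime : l * h * (D - η) ≤ u (l * t) x - u (l * t - l * h) x) :
    h * (discreteLaplacian r (fun y => timeEnvelope p u t y ^ m) x - 2 * ((l ^ (-p)) ^ m * η)) ≤
      timeEnvelope p u t x - timeEnvelope p u (t - h) x := by
  have hprev : timeEnvelope p u (t - h) x ≤ l ^ (-p) * u (l * t - l * h) x := by
    rw [← mul_sub]
    exact timeEnvelope_le hu ⟨by linarith [ht.1], by linarith [ht.2]⟩ hx hl
  calc h * (discreteLaplacian r (fun y => timeEnvelope p u t y ^ m) x - 2 * ((l ^ (-p)) ^ m * η))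
      ≤ h * ((l ^ (-p)) ^ m * (D + η) - 2 * ((l ^ (-p)) ^ m * η)) := by gcongr
    _ = l ^ (-p) * (l * h * (D - η)) := by
        rw [hpm, ← rpow_neg_one_div_mul_self hm1 hl.1]
        ring
    _ ≤ l ^ (-p) * (u (l * t) x - u (l * t - l * h) x) :=
        mul_le_mul_of_nonneg_left htime (rpow_nonneg hl.1.le _)
    _ ≤ timeEnvelope p u t x - timeEnvelope p u (t - h) x := by
        rw [hxl, mul_sub]
        linarith

theorem IsFDESol.eventually_mul_discreteLaplacian_timeEnvelope_sub_le {p ε : ℝ}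
    {K' : Set (EuclideanSpace ℝ (Fin d))} {Q : Set (ℝ × EuclideanSpace ℝ (Fin d))}
    {u : ℝ → EuclideanSpace ℝ (Fin d) → ℝ} (hm0 : 0 ≤ m) (hm1 : m < 1) (hpm : p = 1 / (1 - m))
    (hQ : IsOpen Q) (hu : IsFDESol m Q u) (hK : IsCompact K) (hKQ : Icc 0 T ×ˢ K ⊆ Q)
    (hK'K : K' ⊆ interior K) (hK' : IsCompact K') (hε : 0 < ε) :
    ∀ᶠ r in 𝓝[>] (0 : ℝ), ∀ᶠ h in 𝓝[>] (0 : ℝ), ∀ t ∈ Icc h T, ∀ x ∈ K',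
      h * (discreteLaplacian r (fun y => timeEnvelope p u t y ^ m) x - ε) ≤
        timeEnvelope p u t x - timeEnvelope p u (t - h) x := by
  have hp : 0 < p := hpm ▸ one_div_pos.2 (sub_pos.2 hm1)
  have hpos : ∀ t ∈ Icc 0 T, ∀ x ∈ K, 0 < u t x := fun t ht x hx => hu.1 (t, x) (hKQ ⟨ht, hx⟩)
  have hcont := hu.2.1.continuousOn.mono hKQ
  obtain ⟨l₀, hl₀, hatt⟩ := exists_timeEnvelope_eq_rescale hK hp hpos hcont
  have hK'sub : K' ⊆ K := hK'K.trans interior_subset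
  have hCQ : Icc 0 T ×ˢ K' ⊆ Q := (prod_mono_right hK'sub).trans hKQ
  obtain ⟨η, hη, hηε⟩ : ∃ η > 0, 2 * ((l₀ ^ (-p)) ^ m * η) = ε := by
    have : 0 < (l₀ ^ (-p)) ^ m := rpow_pos_of_pos (rpow_pos_of_pos hl₀.1 _) _
    exact ⟨ε / (2 * (l₀ ^ (-p)) ^ m), by positivity, by field_simp⟩
  filter_upwards [hu.eventually_discreteLaplacian_le hQ (isCompact_Icc.prod hK') hCQ hη,
    eventually_add_sub_single_mem isOpen_interior hK' hK'K] with r hr hrK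
  obtain ⟨h₀, hh₀, hback⟩ : ∃ h₀ > 0, ∀ h ∈ Ioo 0 h₀, ∀ q ∈ Icc 0 T ×ˢ K',
      h * (deriv (fun s => u s q.2) q.1 - η) ≤ u q.1 q.2 - u (q.1 - h) q.2 :=
    mem_nhdsGT_iff_exists_Ioo_subset.1
      (hu.eventually_mul_deriv_sub_le hQ (isCompact_Icc.prod hK') hCQ hη)
  filter_upwards [Ioo_mem_nhdsGT hh₀] with h hh t ht x hx
  have ht0 : t ∈ Icc 0 T := ⟨hh.1.le.trans ht.1, ht.2⟩
  obtain ⟨l, hl, hxl⟩ := hatt t ht0 x (hK'sub hx)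
  have hl' : l ∈ Ioc (0 : ℝ) 1 := ⟨hl₀.1.trans_le hl.1, hl.2⟩
  have hq : (l * t, x) ∈ Icc 0 T ×ˢ K' := ⟨mul_mem_Icc_of_mem_Ioc ht0 hl', hx⟩
  have hlap : discreteLaplacian r (fun y => u (l * t) y ^ m) x ≤
      deriv (fun s => u s x) (l * t) + η := hr (l * t, x) hq
  have hspace := (discreteLaplacian_timeEnvelope_rpow_le hm0 hp hK hpos hcont ht0 hl' (hK'sub hx)
    hxl fun i => ⟨interior_subset (hrK x hx i).1, interior_subset (hrK x hx i).2⟩).trans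
    (mul_le_mul_of_nonneg_left hlap (rpow_nonneg (rpow_nonneg hl'.1.le _) _))
  have htime : l * h * (deriv (fun s => u s x) (l * t) - η) ≤ u (l * t) x - u (l * t - l * h) x :=
    hback _ ⟨mul_pos hl'.1 hh.1, (mul_le_of_le_one_left hh.1.le hl.2).trans_lt hh.2⟩
      (l * t, x) hq
  have hη_le : 2 * ((l ^ (-p)) ^ m * η) ≤ ε := by
    have : l ^ (-p) ≤ l₀ ^ (-p) := rpow_le_rpow_of_nonpos hl₀.1 hl.1 (by linarith)
    have : (l ^ (-p)) ^ m ≤ (l₀ ^ (-p)) ^ m :=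
      rpow_le_rpow (rpow_nonneg hl'.1.le _) this hm0
    rw [← hηε]
    gcongr
  have hstep := mul_discreteLaplacian_timeEnvelope_sub_le hm1 hpm hpos hh.1.le ht hl' (hK'sub hx)
    hxl hspace htime
  exact (mul_le_mul_of_nonneg_left (sub_le_sub_left hη_le _) hh.1.le).trans hstep

theorem IsFDESol.isSupersol_timeEnvelope {Q : Set (ℝ × EuclideanSpace ℝ (Fin d))}
    {u : ℝ → EuclideanSpace ℝ (Fin d) → ℝ} (hm0 : 0 ≤ m) (hm1 : m < 1) (hQ : IsOpen Q)
    (hu : IsFDESol m Q u) (hK : IsCompact K) (hKQ : Icc 0 T ×ˢ K ⊆ Q) :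
    IsSupersol m T K (timeEnvelope (1 / (1 - m)) u) where
  pos _ ht _ hx := timeEnvelope_pos hK (one_div_pos.2 (sub_pos.2 hm1))
    (fun t ht x hx => hu.1 (t, x) (hKQ ⟨ht, hx⟩)) (hu.2.1.continuousOn.mono hKQ) ht hx
  continuousOn := continuousOn_timeEnvelope hK (one_div_pos.2 (sub_pos.2 hm1))
    (fun t ht x hx => hu.1 (t, x) (hKQ ⟨ht, hx⟩)) (hu.2.1.continuousOn.mono hKQ)
  eventually_le_sub _ hK'K hK' _ hε :=
    hu.eventually_mul_discreteLaplacian_timeEnvelope_sub_le hm0 hm1 rfl hQ hK hKQ hK'K hK' hε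

end Supersolution

section SummationByParts

variable {r : ℝ} {x : EuclideanSpace ℝ (Fin d)} {V φ : EuclideanSpace ℝ (Fin d) → ℝ}

theorem integrable_discreteLaplacian (hV : Integrable V) (r : ℝ) :
    Integrable (discreteLaplacian r V) := by
  unfold discreteLaplacian
  exact (integrable_finsetSum _ fun i _ => ((hV.comp_add_right _).add (hV.comp_sub_right _)).sub
    (hV.const_mul 2)).div_const _

theorem integral_add_mul_eq_integral_mul_sub (V φ : EuclideanSpace ℝ (Fin d) → ℝ)
    (a : EuclideanSpace ℝ (Fin d)) : ∫ x, V (x + a) * φ x = ∫ x, V x * φ (x - a) := by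
  simpa only [add_sub_cancel_right] using
    integral_add_right_eq_self (μ := volume) (fun x => V x * φ (x - a)) a

theorem integral_second_difference_mul_comm {C : ℝ} (hV : Integrable V) (hφ : Continuous φ)
    (hC : ∀ x, ‖φ x‖ ≤ C) (a : EuclideanSpace ℝ (Fin d)) :
    ∫ x, (V (x + a) + V (x - a) - 2 * V x) * φ x =
      ∫ x, V x * (φ (x + a) + φ (x - a) - 2 * φ x) := by
  have integral_split : ∀ {f g k : EuclideanSpace ℝ (Fin d) → ℝ}, Integrable f → Integrable g →
      Integrable k → ∫ x, (f x + g x - 2 * k x) = (∫ x, f x) + (∫ x, g x) - 2 * ∫ x, k x :=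
    fun hf hg hk => by
      rw [integral_sub (by exact hf.add hg) (hk.const_mul 2), integral_add hf hg,
        integral_const_mul]
  have hint : ∀ {W ψ : EuclideanSpace ℝ (Fin d) → ℝ}, Integrable W → Continuous ψ →
      (∀ x, ‖ψ x‖ ≤ C) → Integrable fun x => W x * ψ x :=
    fun hW hψ hψC => hW.mul_bdd hψ.aestronglyMeasurable (.of_forall hψC)
  have hsub := integral_add_mul_eq_integral_mul_sub V φ (-a)
  simp only [sub_neg_eq_add, ← sub_eq_add_neg] at hsub
  simp only [add_mul, sub_mul, mul_add, mul_sub, mul_assoc, mul_left_comm _ (2 : ℝ)]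
  rw [integral_split (hint (hV.comp_add_right a) hφ hC) (hint (hV.comp_sub_right a) hφ hC)
      (hint hV hφ hC), integral_split (hint hV (by fun_prop) fun x => hC (x + a))
      (hint hV (by fun_prop) fun x => hC (x - a)) (hint hV hφ hC),
    hsub, integral_add_mul_eq_integral_mul_sub, add_comm (∫ x, V x * φ (x - a))]

theorem integral_discreteLaplacian_mul_comm {C : ℝ} (hV : Integrable V) (hφ : Continuous φ)
    (hC : ∀ x, ‖φ x‖ ≤ C) (r : ℝ) :
    ∫ x, discreteLaplacian r V x * φ x = ∫ x, V x * discreteLaplacian r φ x := by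
  simp only [discreteLaplacian, div_mul_eq_mul_div, mul_div_assoc', Finset.sum_mul, Finset.mul_sum]
  rw [integral_div, integral_div, integral_finsetSum, integral_finsetSum]
  · simp only [integral_second_difference_mul_comm hV hφ hC]
  · refine fun i _ => hV.mul_bdd (c := C + C + 2 * C)
      (Continuous.aestronglyMeasurable (by fun_prop)) (.of_forall fun x => ?_)
    refine (norm_sub_le _ _).trans (add_le_add ((norm_add_le _ _).trans
      (add_le_add (hC _) (hC _))) ?_)
    rw [norm_mul, Real.norm_two]
    linarith [hC x]
  · exact fun i _ => (((hV.comp_add_right _).add (hV.comp_sub_right _)).sub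
      (hV.const_mul 2)).mul_bdd hφ.aestronglyMeasurable (.of_forall hC)

theorem discreteLaplacian_nonneg_of_eq_zero (hφ : ∀ x, 0 ≤ φ x) (hx : φ x = 0) :
    0 ≤ discreteLaplacian r φ x := by
  refine div_nonneg (Finset.sum_nonneg fun i _ => ?_) (sq_nonneg r)
  rw [hx, mul_zero, sub_zero]
  exact add_nonneg (hφ _) (hφ _)

theorem continuous_discreteLaplacian (hφ : Continuous φ) (r : ℝ) :
    Continuous (discreteLaplacian r φ) := by
  unfold discreteLaplacian
  fun_prop

variable {K K' : Set (EuclideanSpace ℝ (Fin d))} {W L : EuclideanSpace ℝ (Fin d) → ℝ}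

theorem discreteLaplacian_indicator_eq (hx : x ∈ K)
    (hxK : ∀ i, x + r • EuclideanSpace.single i 1 ∈ K ∧ x - r • EuclideanSpace.single i 1 ∈ K) :
    discreteLaplacian r (K.indicator W) x = discreteLaplacian r W x := by
  unfold discreteLaplacian
  congr 1
  refine Finset.sum_congr rfl fun i _ => ?_
  rw [indicator_of_mem (hxK i).1, indicator_of_mem (hxK i).2, indicator_of_mem hx]

theorem integrableOn_discreteLaplacian_mul (hK : IsCompact K) (hK' : IsCompact K') (hK'K : K' ⊆ K)
    (hW : ContinuousOn W K) (hφ : Continuous φ)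
    (hrK : ∀ x ∈ K', ∀ i,
      x + r • EuclideanSpace.single i 1 ∈ K ∧ x - r • EuclideanSpace.single i 1 ∈ K) :
    IntegrableOn (fun x => discreteLaplacian r W x * φ x) K' := by
  have hV : Integrable (K.indicator W) :=
    (integrable_indicator_iff hK.measurableSet).2 (hW.integrableOn_compact hK)
  have := (integrable_discreteLaplacian hV r).integrableOn (s := K')
  exact (this.mul_continuousOn hφ.continuousOn hK').congr_fun
    (fun x hx => by simp only [discreteLaplacian_indicator_eq (hK'K hx) (hrK x hx)])
    hK'.measurableSet

theorem neg_integral_mul_le_integral_discreteLaplacian_mul (hK : IsCompact K) (hK' : IsCompact K')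
    (hK'K : K' ⊆ K) (hW : ContinuousOn W K) (hW0 : ∀ x ∈ K, 0 ≤ W x) (hφ : Continuous φ)
    (hφ0 : ∀ x, 0 ≤ φ x) (hφK' : ∀ x ∉ K', φ x = 0) (hL : ContinuousOn L K')
    (hrK : ∀ x ∈ K', ∀ i,
      x + r • EuclideanSpace.single i 1 ∈ K ∧ x - r • EuclideanSpace.single i 1 ∈ K)
    (hφL : ∀ x ∈ K', -L x ≤ discreteLaplacian r φ x) :
    -∫ x in K', W x * L x ≤ ∫ x in K', discreteLaplacian r W x * φ x := by
  have hV : Integrable (K.indicator W) :=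
    (integrable_indicator_iff hK.measurableSet).2 (hW.integrableOn_compact hK)
  have hcs : HasCompactSupport φ := HasCompactSupport.intro hK' hφK'
  obtain ⟨C, hC⟩ := hcs.exists_bound_of_continuous hφ
  have hVφ : Integrable fun x => K.indicator W x * discreteLaplacian r φ x := by
    simp only [← indicator_mul_left]
    exact (integrable_indicator_iff hK.measurableSet).2
      ((hW.mul (continuous_discreteLaplacian hφ r).continuousOn).integrableOn_compact hK)
  calc -∫ x in K', W x * L x
      = ∫ x in K', -(W x * L x) := (integral_neg _).symm
    _ ≤ ∫ x in K', K.indicator W x * discreteLaplacian r φ x := by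
        refine setIntegral_mono_on (((hW.mono hK'K).mul hL).integrableOn_compact hK').neg
          hVφ.integrableOn hK'.measurableSet fun x hx => ?_
        rw [indicator_of_mem (hK'K hx), ← mul_neg]
        exact mul_le_mul_of_nonneg_left (hφL x hx) (hW0 x (hK'K hx))
    _ ≤ ∫ x, K.indicator W x * discreteLaplacian r φ x := by
        rw [← integral_add_compl hK'.measurableSet hVφ]
        exact le_add_of_nonneg_right <| setIntegral_nonneg hK'.measurableSet.compl fun x hx =>
          mul_nonneg (indicator_nonneg hW0 x) (discreteLaplacian_nonneg_of_eq_zero hφ0 (hφK' x hx))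
    _ = ∫ x, discreteLaplacian r (K.indicator W) x * φ x :=
        (integral_discreteLaplacian_mul_comm hV hφ hC r).symm
    _ = ∫ x in K', discreteLaplacian r (K.indicator W) x * φ x :=
        (setIntegral_eq_integral_of_forall_compl_eq_zero fun x hx => by
          rw [hφK' x hx, mul_zero]).symm
    _ = ∫ x in K', discreteLaplacian r W x * φ x :=
        setIntegral_congr_fun hK'.measurableSet fun x hx => by
          rw [discreteLaplacian_indicator_eq (hK'K hx) (hrK x hx)]

end SummationByParts

section Testing

theorem continuousOn_setIntegral_of_isCompact {X Y : Type*} [TopologicalSpace X]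
    [FirstCountableTopology X] [TopologicalSpace Y] [MeasurableSpace Y]
    [OpensMeasurableSpace Y] {μ : Measure Y}
    [IsFiniteMeasureOnCompacts μ] {S : Set X} {K : Set Y} {f : X → Y → ℝ} (hS : IsCompact S)
    (hK : IsCompact K) (hKm : MeasurableSet K)
    (hf : ContinuousOn (fun q : X × Y => f q.1 q.2) (S ×ˢ K)) :
    ContinuousOn (fun t => ∫ x in K, f t x ∂μ) S := by
  obtain ⟨M, hM⟩ := (hS.prod hK).exists_bound_of_continuousOn hf
  refine continuousOn_of_dominated (bound := fun _ => M) (fun t ht => ?_) (fun t ht => ?_)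
    (integrableOn_const hK.measure_lt_top.ne) ?_
  · exact (hf.comp (f := fun x => (t, x)) (by fun_prop) fun x hx =>
      ⟨ht, hx⟩ : ContinuousOn (f t) K).aestronglyMeasurable hKm
  · filter_upwards [ae_restrict_mem hKm] with x hx using hM (t, x) ⟨ht, hx⟩
  · filter_upwards [ae_restrict_mem hKm] with x hx
    exact hf.comp (f := fun t => (t, x)) (by fun_prop) fun t ht => ⟨ht, hx⟩

variable {K K' : Set (EuclideanSpace ℝ (Fin d))} {m T : ℝ} {φ L : EuclideanSpace ℝ (Fin d) → ℝ}
  {v : ℝ → EuclideanSpace ℝ (Fin d) → ℝ}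

/-- Nonnegative continuous test functions `φ` vanishing outside `K'` with `-Δ φ ≤ L` on `K'`, the
Laplacian being understood as the limit of `discreteLaplacian`, uniformly on `K'`. -/
structure IsTestFunction (K' : Set (EuclideanSpace ℝ (Fin d)))
    (φ L : EuclideanSpace ℝ (Fin d) → ℝ) : Prop where
  continuous : Continuous φ
  nonneg : ∀ x, 0 ≤ φ x
  eq_zero : ∀ x ∉ K', φ x = 0
  continuousOn : ContinuousOn L K'
  eventually_neg_le : ∀ η > 0, ∀ᶠ r in 𝓝[>] (0 : ℝ), ∀ x ∈ K',
    -(L x + η) ≤ discreteLaplacian r φ x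

theorem neg_mul_integral_le_integral_sub {r h η ε : ℝ} {W v₁ v₀ : EuclideanSpace ℝ (Fin d) → ℝ}
    (hK : IsCompact K) (hK' : IsCompact K') (hK'K : K' ⊆ K) (hW : ContinuousOn W K)
    (hW0 : ∀ x ∈ K, 0 ≤ W x) (hφ : IsTestFunction K' φ L)
    (hrK : ∀ x ∈ K', ∀ i,
      x + r • EuclideanSpace.single i 1 ∈ K ∧ x - r • EuclideanSpace.single i 1 ∈ K)
    (hφL : ∀ x ∈ K', -(L x + η) ≤ discreteLaplacian r φ x) (hv₁ : ContinuousOn v₁ K')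
    (hv₀ : ContinuousOn v₀ K') (hh : 0 ≤ h)
    (hstep : ∀ x ∈ K', h * (discreteLaplacian r W x - ε) ≤ v₁ x - v₀ x) :
    -((∫ x in K', W x * L x) + η * (∫ x in K', W x) + ε * ∫ x in K', φ x) * h ≤
      (∫ x in K', v₁ x * φ x) - ∫ x in K', v₀ x * φ x := by
  have hφc := hφ.continuous.continuousOn (s := K')
  have hΔ := integrableOn_discreteLaplacian_mul (r := r) hK hK' hK'K hW hφ.continuous hrK
  have hparts := neg_integral_mul_le_integral_discreteLaplacian_mul hK hK' hK'K hW hW0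
    (L := fun x => L x + η) hφ.continuous hφ.nonneg hφ.eq_zero
    (hφ.continuousOn.add continuousOn_const) hrK hφL
  have hL : ∫ x in K', W x * (L x + η) = (∫ x in K', W x * L x) + η * ∫ x in K', W x := by
    simp only [mul_add, mul_comm _ η]
    rw [integral_add (by exact ((hW.mono hK'K).mul hφ.continuousOn).integrableOn_compact hK')
      (((hW.mono hK'K).integrableOn_compact hK').const_mul η), integral_const_mul]
  calc -((∫ x in K', W x * L x) + η * (∫ x in K', W x) + ε * ∫ x in K', φ x) * h
      = h * (-(∫ x in K', W x * (L x + η)) - ε * ∫ x in K', φ x) := by rw [hL]; ring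
    _ ≤ h * ((∫ x in K', discreteLaplacian r W x * φ x) - ε * ∫ x in K', φ x) := by gcongr
    _ = ∫ x in K', h * (discreteLaplacian r W x * φ x - ε * φ x) := by
        rw [integral_const_mul, integral_sub hΔ
          ((hφc.integrableOn_compact hK').const_mul ε), integral_const_mul]
    _ ≤ ∫ x in K', (v₁ x * φ x - v₀ x * φ x) := by
        refine setIntegral_mono_on
          ((hΔ.sub ((hφc.integrableOn_compact hK').const_mul ε)).const_mul h)
          (((hv₁.mul hφc).integrableOn_compact hK').sub ((hv₀.mul hφc).integrableOn_compact hK'))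
          hK'.measurableSet fun x hx => ?_
        have := mul_le_mul_of_nonneg_right (hstep x hx) (hφ.nonneg x)
        linarith
    _ = (∫ x in K', v₁ x * φ x) - ∫ x in K', v₀ x * φ x :=
        integral_sub ((hv₁.mul hφc).integrableOn_compact hK')
          ((hv₀.mul hφc).integrableOn_compact hK')

theorem IsSupersol.continuousOn_apply (hv : IsSupersol m T K v) {t : ℝ} (ht : t ∈ Icc 0 T) :
    ContinuousOn (v t) K :=
  hv.continuousOn.comp (f := fun x => (t, x)) (by fun_prop) fun _ hx => ⟨ht, hx⟩

theorem IsSupersol.continuousOn_rpow (hv : IsSupersol m T K v) {t : ℝ} (ht : t ∈ Icc 0 T) :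
    ContinuousOn (fun x => v t x ^ m) K :=
  (hv.continuousOn_apply ht).rpow_const fun x hx => Or.inl (hv.pos t ht x hx).ne'

theorem IsSupersol.eventually_neg_mul_le_integral_sub (hv : IsSupersol m T K v) (hK : IsCompact K)
    (hK' : IsCompact K') (hK'K : K' ⊆ interior K) (hφ : IsTestFunction K' φ L) {t ε : ℝ}
    (ht : t ∈ Icc 0 T) (hε : 0 < ε) :
    ∀ᶠ h in 𝓝[>] (0 : ℝ), h ≤ t → -((∫ x in K', v t x ^ m * L x) + ε) * h ≤
      (∫ x in K', v t x * φ x) - ∫ x in K', v (t - h) x * φ x := by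
  have hsub : K' ⊆ K := hK'K.trans interior_subset
  have exists_small : ∀ S : ℝ, 0 ≤ S → ∃ η > 0, η * S ≤ ε / 2 := fun S hS =>
    ⟨ε / (2 * (S + 1)), by positivity, by
      rw [div_mul_eq_mul_div, div_le_iff₀ (by positivity)]; nlinarith⟩
  have hrpow : ∀ x ∈ K, 0 ≤ v t x ^ m := fun x hx => rpow_nonneg (hv.pos t ht x hx).le _
  obtain ⟨η, hη, hηS⟩ := exists_small (∫ x in K', v t x ^ m)
    (setIntegral_nonneg hK'.measurableSet fun x hx => hrpow x (hsub hx))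
  obtain ⟨ε', hε', hεS⟩ := exists_small (∫ x in K', φ x)
    (setIntegral_nonneg hK'.measurableSet fun x _ => hφ.nonneg x)
  obtain ⟨r, hr, hφL, hrK⟩ := ((hv.eventually_le_sub K' hK'K hK' ε' hε').and
    ((hφ.eventually_neg_le η hη).and
      (eventually_add_sub_single_mem isOpen_interior hK' hK'K))).exists
  filter_upwards [hr, self_mem_nhdsWithin] with h hh hh0 hht
  have hh0 : 0 < h := hh0
  refine le_trans ?_ (neg_mul_integral_le_integral_sub hK hK' hsub (hv.continuousOn_rpow ht) hrpow
    hφ (fun x hx i => ⟨interior_subset (hrK x hx i).1, interior_subset (hrK x hx i).2⟩) hφL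
    ((hv.continuousOn_apply ht).mono hsub)
    ((hv.continuousOn_apply ⟨by linarith, by linarith [ht.2]⟩).mono hsub) hh0.le
    fun x hx => hh t ⟨hht, ht.2⟩ x hx)
  exact mul_le_mul_of_nonneg_right (by linarith) hh0.le

theorem IsSupersol.integral_sub_mul_le (hv : IsSupersol m T K v) (hK : IsCompact K)
    (hK' : IsCompact K') (hK'K : K' ⊆ interior K) (hφ : IsTestFunction K' φ L) {a b c : ℝ}
    (ha : 0 ≤ a) (hab : a ≤ b) (hb : b ≤ T) (hc : 0 ≤ c)
    (hLc : ∀ t ∈ Ioc a b, ∫ x in K', v t x * φ x ≤ ∫ x in K', v a x * φ x →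
      ∫ x in K', v t x ^ m * L x ≤ c) :
    (∫ x in K', v a x * φ x) - c * (b - a) ≤ ∫ x in K', v b x * φ x := by
  have hsub : Icc a b ×ˢ K' ⊆ Icc 0 T ×ˢ K :=
    prod_mono (Icc_subset_Icc ha hb) (hK'K.trans interior_subset)
  have hcont : ContinuousOn (fun t => ∫ x in K', v t x * φ x) (Icc a b) :=
    continuousOn_setIntegral_of_isCompact isCompact_Icc hK' hK'.measurableSet
      ((hv.continuousOn.mono hsub).mul (hφ.continuous.comp continuous_snd).continuousOn)
  refine sub_mul_le_of_eventually_left_difference hab hc hcont fun t ht hle ε hε => ?_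
  filter_upwards [hv.eventually_neg_mul_le_integral_sub hK hK' hK'K hφ
    ⟨ha.trans ht.1.le, ht.2.trans hb⟩ hε, self_mem_nhdsWithin] with h hh hh0 hht
  have hh0 : 0 < h := hh0
  refine le_trans ?_ (hh (by linarith))
  gcongr
  exact hLc t ht hle

end Testing

section Cutoff

variable {R p r : ℝ} {x₀ x : EuclideanSpace ℝ (Fin d)}

theorem norm_add_smul_single_sq (ξ : EuclideanSpace ℝ (Fin d)) (r : ℝ) (i : Fin d) :
    ‖ξ + r • EuclideanSpace.single i (1 : ℝ)‖ ^ 2 = ‖ξ‖ ^ 2 + 2 * r * ξ i + r ^ 2 := by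
  rw [norm_add_sq_real, inner_smul_right, real_inner_comm, EuclideanSpace.inner_single_left,
    norm_smul, PiLp.norm_single, norm_one, mul_one, norm_eq_abs, sq_abs, map_one, one_mul]
  ring

theorem discreteLaplacian_norm_sub_sq (hr : r ≠ 0) :
    discreteLaplacian r (fun y => ‖y - x₀‖ ^ 2) x = 2 * d := by
  have hdiff (i : Fin d) : ‖x + r • EuclideanSpace.single i (1 : ℝ) - x₀‖ ^ 2 +
      ‖x - r • EuclideanSpace.single i (1 : ℝ) - x₀‖ ^ 2 - 2 * ‖x - x₀‖ ^ 2 = 2 * r ^ 2 := by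
    rw [add_sub_right_comm x, sub_right_comm x, sub_eq_add_neg (x - x₀), ← neg_smul,
      norm_add_smul_single_sq, norm_add_smul_single_sq]
    ring
  simp only [discreteLaplacian, hdiff, Finset.sum_const, Finset.card_univ, Fintype.card_fin,
    nsmul_eq_mul]
  field_simp

theorem mul_discreteLaplacian_le_discreteLaplacian_comp {g : ℝ → ℝ} {k : ℝ}
    {z : EuclideanSpace ℝ (Fin d) → ℝ} (hg : ∀ s, g (z x) + k * (s - z x) ≤ g s) :
    k * discreteLaplacian r z x ≤ discreteLaplacian r (fun y => g (z y)) x := by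
  rw [discreteLaplacian, discreteLaplacian, ← mul_div_assoc, Finset.mul_sum]
  gcongr with i
  linarith [hg (z (x + r • EuclideanSpace.single i 1)), hg (z (x - r • EuclideanSpace.single i 1))]

theorem max_zero_rpow_add_mul_sub_le (hp : 1 < p) (a s : ℝ) :
    max a 0 ^ p + p * max a 0 ^ (p - 1) * (s - a) ≤ max s 0 ^ p := by
  rcases le_or_gt a 0 with ha | ha
  · rw [max_eq_right ha, zero_rpow (by linarith), zero_rpow (by linarith)]
    simpa using rpow_nonneg (le_max_right s 0) p
  have hmax : a ^ p + p * a ^ (p - 1) * (s - a) ≤ a ^ p + p * a ^ (p - 1) * (max s 0 - a) := by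
    gcongr
    exact le_max_left s 0
  have hbernoulli := one_add_mul_self_le_rpow_one_add (s := max s 0 / a - 1)
    (by linarith [div_nonneg (le_max_right s 0) ha.le]) hp.le
  rw [add_sub_cancel, div_rpow (le_max_right s 0) ha.le, le_div_iff₀ (rpow_pos_of_pos ha p)]
    at hbernoulli
  rw [max_eq_left ha.le]
  refine hmax.trans (le_of_eq_of_le ?_ hbernoulli)
  rw [rpow_sub_one ha.ne']
  field_simp

/-- The `p`-th power of the positive part of the paraboloid `1 - ‖x - x₀‖² / (2 R²)`. For
`p = 1 / (1 - m)` it satisfies `-Δ φ ≤ Λ φ ^ m` with `Λ = p d / R²`, which makes the mass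
`∫ v φ` of a supersolution `v` obey a closed differential inequality. -/
noncomputable def cutoff (p R : ℝ) (x₀ x : EuclideanSpace ℝ (Fin d)) : ℝ :=
  max (1 - ‖x - x₀‖ ^ 2 / (2 * R ^ 2)) 0 ^ p

theorem continuous_cutoff (hp : 0 ≤ p) : Continuous (cutoff p R x₀) :=
  Continuous.rpow_const (by fun_prop) fun _ => Or.inr hp

theorem cutoff_nonneg : 0 ≤ cutoff p R x₀ x :=
  rpow_nonneg (le_max_right _ _) p

theorem cutoff_le_one (hp : 0 ≤ p) : cutoff p R x₀ x ≤ 1 :=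
  rpow_le_one (le_max_right _ _)
    (max_le (sub_le_self _ (by positivity)) zero_le_one) hp

theorem cutoff_eq_zero (hp : p ≠ 0) (hR : 0 < R) (hx : 2 * R ^ 2 ≤ ‖x - x₀‖ ^ 2) :
    cutoff p R x₀ x = 0 := by
  rw [cutoff, max_eq_right (sub_nonpos.2 ((one_le_div (by positivity)).2 hx)), zero_rpow hp]

theorem rpow_one_half_le_cutoff (hp : 0 ≤ p) (hR : 0 < R) (hx : x ∈ ball x₀ R) :
    (1 / 2) ^ p ≤ cutoff p R x₀ x := by
  rw [mem_ball, dist_eq_norm] at hx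
  have hsq : ‖x - x₀‖ ^ 2 ≤ R ^ 2 := by gcongr
  refine rpow_le_rpow (by norm_num) (le_max_of_le_left ?_) hp
  rw [le_sub_comm, div_le_iff₀ (by positivity)]
  linarith

theorem neg_mul_cutoff_rpow_le_discreteLaplacian {m : ℝ} (hp : 1 < p) (hpm : p * m = p - 1)
    (hr : r ≠ 0) :
    -(p * d / R ^ 2 * cutoff p R x₀ x ^ m) ≤ discreteLaplacian r (cutoff p R x₀) x := by
  have hΔ : discreteLaplacian r (fun y => 1 - ‖y - x₀‖ ^ 2 / (2 * R ^ 2)) x = -(d / R ^ 2) := by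
    have hscale : discreteLaplacian r (fun y => 1 - ‖y - x₀‖ ^ 2 / (2 * R ^ 2)) x =
        -(1 / (2 * R ^ 2)) * discreteLaplacian r (fun y => ‖y - x₀‖ ^ 2) x := by
      rw [discreteLaplacian, discreteLaplacian, ← mul_div_assoc, Finset.mul_sum]
      congr 1
      exact Finset.sum_congr rfl fun i _ => by ring
    rw [hscale, discreteLaplacian_norm_sub_sq hr]
    ring
  refine le_of_eq_of_le ?_ (mul_discreteLaplacian_le_discreteLaplacian_comp
    (g := fun s => max s 0 ^ p) (z := fun y => 1 - ‖y - x₀‖ ^ 2 / (2 * R ^ 2))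
    (max_zero_rpow_add_mul_sub_le hp _))
  rw [hΔ, cutoff, ← rpow_mul (le_max_right _ _), hpm]
  ring

theorem isTestFunction_cutoff {m : ℝ} (hm : 0 ≤ m) (hp : 1 < p) (hpm : p * m = p - 1) (hR : 0 < R) :
    IsTestFunction (closedBall x₀ (2 * R)) (cutoff p R x₀)
      (fun x => p * d / R ^ 2 * cutoff p R x₀ x ^ m) where
  continuous := continuous_cutoff (by linarith)
  nonneg _ := cutoff_nonneg
  eq_zero x hx := by
    rw [mem_closedBall, dist_eq_norm, not_le] at hx
    exact cutoff_eq_zero (by linarith) hR (by nlinarith)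
  continuousOn := (continuous_const.mul
    ((continuous_cutoff (by linarith)).rpow_const fun _ => Or.inr hm)).continuousOn
  eventually_neg_le η hη := by
    filter_upwards [self_mem_nhdsWithin] with r hr x _
    exact le_trans (by linarith) (neg_mul_cutoff_rpow_le_discreteLaplacian hp hpm (ne_of_gt hr))

end Cutoff

section MassPersistence

theorem setIntegral_rpow_le {X : Type*} [MeasurableSpace X] {μ : Measure X} {S : Set X}
    {f : X → ℝ} {m : ℝ} (hm0 : 0 ≤ m) (hm1 : m ≤ 1) (hS : MeasurableSet S) (hS0 : μ S ≠ 0)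
    (hS1 : μ S ≠ ⊤) (hf0 : ∀ x ∈ S, 0 ≤ f x) (hf : IntegrableOn f S μ)
    (hfm : IntegrableOn (fun x => f x ^ m) S μ) :
    ∫ x in S, f x ^ m ∂μ ≤ μ.real S * ((∫ x in S, f x ∂μ) / μ.real S) ^ m := by
  have hpos : 0 < μ.real S := ENNReal.toReal_pos hS0 hS1
  have hjensen := (concaveOn_rpow hm0 hm1).le_map_set_average
    (continuousOn_id.rpow_const fun _ _ => Or.inr hm0) isClosed_Ici hS0 hS1
    ((ae_restrict_mem hS).mono hf0) hf hfm
  rw [setAverage_eq, setAverage_eq, smul_eq_mul, smul_eq_mul, inv_mul_eq_div, inv_mul_eq_div,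
    div_le_iff₀' hpos] at hjensen
  exact hjensen

variable {K K' : Set (EuclideanSpace ℝ (Fin d))} {m T Λ t : ℝ} {φ : EuclideanSpace ℝ (Fin d) → ℝ}
  {v : ℝ → EuclideanSpace ℝ (Fin d) → ℝ}

theorem IsSupersol.integral_rpow_mul_le (hm0 : 0 ≤ m) (hm1 : m ≤ 1) (hv : IsSupersol m T K v)
    (hK' : IsCompact K') (hK'0 : volume K' ≠ 0) (hK'K : K' ⊆ K) (hφ : Continuous φ)
    (hφ0 : ∀ x, 0 ≤ φ x) (hΛ : 0 ≤ Λ) (ht : t ∈ Icc 0 T) :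
    ∫ x in K', v t x ^ m * (Λ * φ x ^ m) ≤
      Λ * (volume.real K' * ((∫ x in K', v t x * φ x) / volume.real K') ^ m) := by
  have hcont : ContinuousOn (fun x => v t x * φ x) K' :=
    ((hv.continuousOn_apply ht).mono hK'K).mul hφ.continuousOn
  have hv0 : ∀ x ∈ K', 0 ≤ v t x := fun x hx => (hv.pos t ht x (hK'K hx)).le
  have hcongr : ∫ x in K', v t x ^ m * (Λ * φ x ^ m) = Λ * ∫ x in K', (v t x * φ x) ^ m := by
    rw [← integral_const_mul]
    refine setIntegral_congr_fun hK'.measurableSet fun x hx => ?_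
    simp only [mul_rpow (hv0 x hx) (hφ0 x)]
    ring
  rw [hcongr]
  gcongr
  exact setIntegral_rpow_le hm0 hm1 hK'.measurableSet hK'0 hK'.measure_lt_top.ne
    (fun x hx => mul_nonneg (hv0 x hx) (hφ0 x)) (hcont.integrableOn_compact hK')
    ((hcont.rpow_const fun _ _ => Or.inr hm0).integrableOn_compact hK')

theorem IsSupersol.half_integral_le (hm0 : 0 ≤ m) (hm1 : m ≤ 1) (hv : IsSupersol m T K v)
    (hK : IsCompact K) (hK' : IsCompact K') (hK'0 : volume K' ≠ 0) (hK'K : K' ⊆ interior K)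
    (hφ : IsTestFunction K' φ fun x => Λ * φ x ^ m) (hΛ : 0 ≤ Λ) (ht : t ∈ Icc 0 T)
    (htΛ : 2 * Λ * t ≤ ((∫ x in K', v 0 x * φ x) / volume.real K') ^ (1 - m)) :
    (∫ x in K', v 0 x * φ x) / 2 ≤ ∫ x in K', v t x * φ x := by
  have hsub : K' ⊆ K := hK'K.trans interior_subset
  have hP : 0 < volume.real K' := ENNReal.toReal_pos hK'0 hK'.measure_lt_top.ne
  have hY0 : ∀ s ∈ Icc 0 T, 0 ≤ ∫ x in K', v s x * φ x := fun s hs =>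
    setIntegral_nonneg hK'.measurableSet fun x hx =>
      mul_nonneg (hv.pos s hs x (hsub hx)).le (hφ.nonneg x)
  set Y := ∫ x in K', v 0 x * φ x
  set P := volume.real K'
  have hY : 0 ≤ Y / P := div_nonneg (hY0 0 ⟨le_rfl, ht.1.trans ht.2⟩) hP.le
  have hmass := hv.integral_sub_mul_le hK hK' hK'K hφ le_rfl ht.1 ht.2
    (c := Λ * (P * (Y / P) ^ m)) (by positivity) fun s hs hle =>
      (hv.integral_rpow_mul_le hm0 hm1 hK' hK'0 hsub hφ.continuous hφ.nonneg hΛ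
        ⟨hs.1.le, hs.2.trans ht.2⟩).trans (by
          have := hY0 s ⟨hs.1.le, hs.2.trans ht.2⟩
          gcongr)
  have hloss : 2 * (Λ * (P * (Y / P) ^ m) * (t - 0)) ≤ Y := by
    calc 2 * (Λ * (P * (Y / P) ^ m) * (t - 0)) = 2 * Λ * t * (P * (Y / P) ^ m) := by ring
      _ ≤ (Y / P) ^ (1 - m) * (P * (Y / P) ^ m) := by gcongr
      _ = (Y / P) ^ (1 - m) * (Y / P) ^ m * P := by ring
      _ = Y := by
        rw [← rpow_add' hY (by norm_num), sub_add_cancel, rpow_one, div_mul_cancel₀ _ hP.ne']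
  linarith

end MassPersistence

section GreenFunction

variable {k B s : ℝ}

theorem intervalIntegrable_rpow_of_pos (k : ℝ) {a b : ℝ} (ha : 0 < a) (hb : 0 < b) :
    IntervalIntegrable (fun σ : ℝ => σ ^ k) volume a b :=
  ContinuousOn.intervalIntegrable fun _ hx =>
    (continuousAt_rpow_const _ _ (Or.inl ((lt_min ha hb).trans_le hx.1).ne')).continuousWithinAt

theorem hasDerivAt_integral_rpow_left (hB : 0 < B) (hs : 0 < s) :
    HasDerivAt (fun s => ∫ σ in s..B, σ ^ (-k)) (-(s ^ (-k))) s :=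
  intervalIntegral.integral_hasDerivAt_left (intervalIntegrable_rpow_of_pos _ hs hB)
    (Measurable.stronglyMeasurable (by fun_prop)).stronglyMeasurableAtFilter
    (continuousAt_rpow_const _ _ (Or.inl hs.ne'))

theorem integral_rpow_nonpos_of_le (hB : 0 ≤ B) (hs : B ≤ s) : ∫ σ in s..B, σ ^ (-k) ≤ 0 := by
  rw [intervalIntegral.integral_symm, neg_nonpos]
  exact intervalIntegral.integral_nonneg hs fun x hx => rpow_nonneg (hB.trans hx.1) _

theorem sub_mul_rpow_le_integral_rpow (hk : 0 ≤ k) (hs : 0 < s) (hsB : s ≤ B) :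
    (B - s) * B ^ (-k) ≤ ∫ σ in s..B, σ ^ (-k) := by
  have := intervalIntegral.integral_mono_on (f := fun _ => B ^ (-k)) hsB (by simp)
    (intervalIntegrable_rpow_of_pos (-k) hs (hs.trans_le hsB)) fun x hx =>
      rpow_le_rpow_of_nonpos (hs.trans_le hx.1) hx.2 (neg_nonpos.2 hk)
  rwa [intervalIntegral.integral_const, smul_eq_mul] at this

variable {R ε r : ℝ} {x₀ x : EuclideanSpace ℝ (Fin d)}

/-- A multiple of the Green function of the ball of radius `2 R` with pole `x₀`, regularised at
scale `ε`: with `s = ‖x - x₀‖² + ε²` it is the positive part of `∫ σ in s..4R², σ ^ (-d/2)`,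
which for `ε = 0` is harmonic away from `x₀`. -/
noncomputable def greenFunction (R ε : ℝ) (x₀ x : EuclideanSpace ℝ (Fin d)) : ℝ :=
  max (∫ σ in (‖x - x₀‖ ^ 2 + ε ^ 2)..(4 * R ^ 2), σ ^ (-((d : ℝ) / 2))) 0

/-- Minus the Laplacian of `greenFunction R ε x₀` inside its support, an approximate identity
at `x₀` as `ε` tends to zero, up to normalisation. -/
noncomputable def greenKernel (ε : ℝ) (x₀ x : EuclideanSpace ℝ (Fin d)) : ℝ :=
  2 * d * ε ^ 2 * (‖x - x₀‖ ^ 2 + ε ^ 2) ^ (-((d : ℝ) / 2) - 1)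

theorem norm_sq_add_sq_pos (hε : 0 < ε) (x : EuclideanSpace ℝ (Fin d)) : 0 < ‖x‖ ^ 2 + ε ^ 2 := by
  positivity

theorem continuous_norm_sub_sq_add_sq_rpow (hε : 0 < ε) (p : ℝ) :
    Continuous fun x : EuclideanSpace ℝ (Fin d) => (‖x - x₀‖ ^ 2 + ε ^ 2) ^ p :=
  Continuous.rpow_const (by fun_prop) fun _ => Or.inl (norm_sq_add_sq_pos hε _).ne'

theorem continuous_greenKernel (hε : 0 < ε) : Continuous (greenKernel ε x₀) :=
  continuous_const.mul (continuous_norm_sub_sq_add_sq_rpow hε _)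

theorem greenKernel_nonneg (ε : ℝ) (x₀ x : EuclideanSpace ℝ (Fin d)) : 0 ≤ greenKernel ε x₀ x := by
  unfold greenKernel
  positivity

theorem greenFunction_nonneg : 0 ≤ greenFunction R ε x₀ x :=
  le_max_right _ _

theorem continuous_greenFunction (hR : 0 < R) (hε : 0 < ε) :
    Continuous (greenFunction R ε x₀) := by
  refine Continuous.max (continuous_iff_continuousAt.2 fun x => ?_) continuous_const
  exact ((hasDerivAt_integral_rpow_left (by positivity)
    (norm_sq_add_sq_pos hε (x - x₀))).continuousAt).comp
      (f := fun x : EuclideanSpace ℝ (Fin d) => ‖x - x₀‖ ^ 2 + ε ^ 2) (by fun_prop)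

theorem greenFunction_eq_zero (hR : 0 < R) (hx : x ∉ closedBall x₀ (2 * R)) :
    greenFunction R ε x₀ x = 0 := by
  rw [mem_closedBall, dist_eq_norm, not_le] at hx
  exact max_eq_right (integral_rpow_nonpos_of_le (by positivity) (by nlinarith [sq_nonneg ε]))

theorem mul_cutoff_le_greenFunction {p : ℝ} (hp : 0 < p) (hε : 0 < ε) (hεR : ε ≤ R) :
    R ^ 2 * (4 * R ^ 2) ^ (-((d : ℝ) / 2)) * cutoff p R x₀ x ≤ greenFunction R ε x₀ x := by
  have hR : 0 < R := hε.trans_le hεR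
  rcases le_or_gt (2 * R ^ 2) (‖x - x₀‖ ^ 2) with hx | hx
  · rw [cutoff_eq_zero hp.ne' hR hx, mul_zero]
    exact greenFunction_nonneg
  have hs : ‖x - x₀‖ ^ 2 + ε ^ 2 ≤ 3 * R ^ 2 := by nlinarith
  calc R ^ 2 * (4 * R ^ 2) ^ (-((d : ℝ) / 2)) * cutoff p R x₀ x
      ≤ R ^ 2 * (4 * R ^ 2) ^ (-((d : ℝ) / 2)) :=
        mul_le_of_le_one_right (by positivity) (cutoff_le_one hp.le)
    _ ≤ (4 * R ^ 2 - (‖x - x₀‖ ^ 2 + ε ^ 2)) * (4 * R ^ 2) ^ (-((d : ℝ) / 2)) := by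
        gcongr
        linarith
    _ ≤ ∫ σ in (‖x - x₀‖ ^ 2 + ε ^ 2)..(4 * R ^ 2), σ ^ (-((d : ℝ) / 2)) :=
        sub_mul_rpow_le_integral_rpow (by positivity) (norm_sq_add_sq_pos hε _)
          (hs.trans (by nlinarith))
    _ ≤ greenFunction R ε x₀ x := le_max_left _ _

theorem hasLineDerivAt_norm_sub_sq_add_const (x₀ x : EuclideanSpace ℝ (Fin d)) (c : ℝ) (i : Fin d) :
    HasLineDerivAt ℝ (fun y => ‖y - x₀‖ ^ 2 + c) (2 * (x - x₀) i) x
      (EuclideanSpace.single i 1) := by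
  simp only [HasLineDerivAt, add_sub_right_comm x, norm_add_smul_single_sq]
  have hlin := ((hasDerivAt_id (0 : ℝ)).const_mul 2).mul_const ((x - x₀) i)
  exact (((hlin.const_add (‖x - x₀‖ ^ 2)).add ((hasDerivAt_id (0 : ℝ)).pow 2)).add_const
    c).congr_deriv (by simp)

theorem hasLineDerivAt_sub_apply (x₀ x : EuclideanSpace ℝ (Fin d)) (i : Fin d) :
    HasLineDerivAt ℝ (fun y => (y - x₀) i) 1 x (EuclideanSpace.single i 1) := by
  have : (fun t : ℝ => (x + t • EuclideanSpace.single i (1 : ℝ) - x₀) i) =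
      fun t => x i + t - x₀ i := by
    ext t; simp
  rw [HasLineDerivAt, this]
  exact ((hasDerivAt_id (0 : ℝ)).const_add (x i)).sub_const (x₀ i)

theorem hasLineDerivAt_integral_rpow (hB : 0 < B) (hε : 0 < ε) (i : Fin d) :
    HasLineDerivAt ℝ (fun y => ∫ σ in (‖y - x₀‖ ^ 2 + ε ^ 2)..B, σ ^ (-k))
      (-((‖x - x₀‖ ^ 2 + ε ^ 2) ^ (-k)) * (2 * (x - x₀) i)) x (EuclideanSpace.single i 1) :=
  HasDerivAt.comp_of_eq (h := fun t : ℝ => ‖x + t • EuclideanSpace.single i 1 - x₀‖ ^ 2 + ε ^ 2) 0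
    (hasDerivAt_integral_rpow_left hB (norm_sq_add_sq_pos hε (x - x₀)))
    (hasLineDerivAt_norm_sub_sq_add_const x₀ x (ε ^ 2) i) (by simp)

theorem hasLineDerivAt_neg_rpow_mul (hε : 0 < ε) (i : Fin d) :
    HasLineDerivAt ℝ (fun y => -((‖y - x₀‖ ^ 2 + ε ^ 2) ^ (-k)) * (2 * (y - x₀) i))
      (-2 * (‖x - x₀‖ ^ 2 + ε ^ 2) ^ (-k) +
        4 * k * (x - x₀) i ^ 2 * (‖x - x₀‖ ^ 2 + ε ^ 2) ^ (-k - 1)) x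
      (EuclideanSpace.single i 1) := by
  have hrpow := (hasLineDerivAt_norm_sub_sq_add_const x₀ x (ε ^ 2) i).rpow_const (p := -k)
    (Or.inl (norm_sq_add_sq_pos hε _).ne')
  refine (hrpow.neg.mul ((hasLineDerivAt_sub_apply x₀ x i).const_mul 2)).congr_deriv ?_
  simp only [zero_smul, add_zero, Pi.neg_apply]
  ring

theorem sum_neg_rpow_add_eq_neg_greenKernel (hε : 0 < ε) :
    ∑ i, (-2 * (‖x - x₀‖ ^ 2 + ε ^ 2) ^ (-((d : ℝ) / 2)) +
      4 * ((d : ℝ) / 2) * (x - x₀) i ^ 2 * (‖x - x₀‖ ^ 2 + ε ^ 2) ^ (-((d : ℝ) / 2) - 1)) =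
      -greenKernel ε x₀ x := by
  have hrpow : (‖x - x₀‖ ^ 2 + ε ^ 2) ^ (-((d : ℝ) / 2)) =
      (‖x - x₀‖ ^ 2 + ε ^ 2) ^ (-((d : ℝ) / 2) - 1) * (‖x - x₀‖ ^ 2 + ε ^ 2) := by
    rw [← rpow_add_one (norm_sq_add_sq_pos hε _).ne', sub_add_cancel]
  have hsum : ∑ i, (x - x₀) i ^ 2 = ‖x - x₀‖ ^ 2 := by
    simp only [EuclideanSpace.norm_sq_eq, norm_eq_abs, sq_abs]
  rw [Finset.sum_add_distrib, Finset.sum_const, ← Finset.sum_mul, ← Finset.mul_sum, hsum, hrpow,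
    Finset.card_univ, Fintype.card_fin, nsmul_eq_mul, greenKernel]
  ring

theorem eventually_abs_discreteLaplacian_integral_rpow_add_greenKernel_le {η : ℝ}
    {C : Set (EuclideanSpace ℝ (Fin d))} (hC : IsCompact C) (hB : 0 < B) (hε : 0 < ε)
    (hη : 0 < η) :
    ∀ᶠ r in 𝓝[>] (0 : ℝ), ∀ x ∈ C, |discreteLaplacian r (fun y =>
      ∫ σ in (‖y - x₀‖ ^ 2 + ε ^ 2)..B, σ ^ (-((d : ℝ) / 2))) x + greenKernel ε x₀ x| ≤ η := by
  have hH (i : Fin d) : Continuous fun x : EuclideanSpace ℝ (Fin d) =>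
      -2 * (‖x - x₀‖ ^ 2 + ε ^ 2) ^ (-((d : ℝ) / 2)) +
        4 * ((d : ℝ) / 2) * (x - x₀) i ^ 2 * (‖x - x₀‖ ^ 2 + ε ^ 2) ^ (-((d : ℝ) / 2) - 1) := by
    have := continuous_norm_sub_sq_add_sq_rpow (x₀ := x₀) hε
    fun_prop
  have hline := eventually_abs_discreteLaplacian_sub_le (C := {(0 : ℝ)} ×ˢ C) isOpen_univ
    (isCompact_singleton.prod hC) (subset_univ _)
    (F := fun p => ∫ σ in (‖p.2 - x₀‖ ^ 2 + ε ^ 2)..B, σ ^ (-((d : ℝ) / 2)))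
    (G := fun i p => -((‖p.2 - x₀‖ ^ 2 + ε ^ 2) ^ (-((d : ℝ) / 2))) * (2 * (p.2 - x₀) i))
    (fun i p _ => hasLineDerivAt_integral_rpow (x := p.2) hB hε i)
    (fun i p _ => hasLineDerivAt_neg_rpow_mul (x := p.2) hε i)
    (fun i => ((hH i).comp continuous_snd).continuousOn) hη
  filter_upwards [hline] with r hr x hx
  have := hr (0, x) ⟨rfl, hx⟩
  rwa [sum_neg_rpow_add_eq_neg_greenKernel hε, sub_neg_eq_add] at this

theorem isTestFunction_greenFunction (hR : 0 < R) (hε : 0 < ε) :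
    IsTestFunction (closedBall x₀ (2 * R)) (greenFunction R ε x₀) (greenKernel ε x₀) where
  continuous := continuous_greenFunction hR hε
  nonneg _ := greenFunction_nonneg
  eq_zero _ hx := greenFunction_eq_zero hR hx
  continuousOn := (continuous_greenKernel hε).continuousOn
  eventually_neg_le η hη := by
    filter_upwards [eventually_abs_discreteLaplacian_integral_rpow_add_greenKernel_le
      (x₀ := x₀) (isCompact_closedBall x₀ (2 * R)) (show 0 < 4 * R ^ 2 by positivity) hε hη]
      with r hr x hx
    rcases le_or_gt (∫ σ in (‖x - x₀‖ ^ 2 + ε ^ 2)..(4 * R ^ 2), σ ^ (-((d : ℝ) / 2))) 0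
      with hneg | hpos
    · refine le_trans (neg_nonpos.2 ?_) (discreteLaplacian_nonneg_of_eq_zero
        (fun _ => greenFunction_nonneg) (max_eq_right hneg))
      linarith [greenKernel_nonneg ε x₀ x]
    · have := mul_discreteLaplacian_le_discreteLaplacian_comp (k := 1) (r := r) (x := x)
        (g := fun s => max s 0)
        (z := fun y => ∫ σ in (‖y - x₀‖ ^ 2 + ε ^ 2)..(4 * R ^ 2), σ ^ (-((d : ℝ) / 2)))
        fun s => by rw [max_eq_left hpos.le, one_mul, add_sub_cancel]; exact le_max_left s 0
      refine le_trans ?_ this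
      linarith [(abs_le.1 (hr x hx)).1]

end GreenFunction

section ApproximateIdentity

theorem integrable_greenKernel_one : Integrable (greenKernel 1 (0 : EuclideanSpace ℝ (Fin d))) := by
  have := (integrable_rpow_neg_one_add_norm_sq (E := EuclideanSpace ℝ (Fin d)) (μ := volume)
    (r := (d : ℝ) + 2) (by simp)).const_mul (2 * (d : ℝ))
  refine this.congr (.of_forall fun y => ?_)
  simp only [greenKernel, one_pow, mul_one, sub_zero, add_comm (1 : ℝ)]
  ring_nf

theorem integral_greenKernel_one_pos (hd : 1 ≤ d) :
    0 < ∫ y, greenKernel 1 (0 : EuclideanSpace ℝ (Fin d)) y := by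
  have hpos (y : EuclideanSpace ℝ (Fin d)) : 0 < greenKernel 1 0 y := by
    have : 0 < d := hd
    unfold greenKernel
    positivity
  rw [integral_pos_iff_support_of_nonneg (fun y => (hpos y).le) integrable_greenKernel_one,
    Function.support_eq_univ fun y => (hpos y).ne']
  exact Measure.measure_univ_pos.2 (NeZero.ne _)

theorem greenKernel_inv_eq_pow_mul (x₀ x : EuclideanSpace ℝ (Fin d)) {c : ℝ} (hc : 0 < c) :
    greenKernel c⁻¹ x₀ x = c ^ d * greenKernel 1 0 (c • (x₀ - x)) := by
  have hscale : ‖x - x₀‖ ^ 2 + c⁻¹ ^ 2 = (c ^ 2)⁻¹ * (‖c • (x₀ - x)‖ ^ 2 + 1 ^ 2) := by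
    rw [norm_smul, mul_pow, norm_eq_abs, sq_abs, norm_sub_rev]
    field_simp
  have hpow : ((c ^ 2)⁻¹ : ℝ) ^ (-((d : ℝ) / 2) - 1) = c ^ d * c ^ 2 := by
    rw [← rpow_natCast c 2, ← rpow_natCast c d, ← rpow_neg hc.le, ← rpow_mul hc.le, ← rpow_add hc]
    push_cast
    ring_nf
  rw [greenKernel, greenKernel, hscale, mul_rpow (by positivity) (by positivity), hpow, sub_zero]
  field_simp

theorem norm_pow_mul_greenKernel_one_le (x : EuclideanSpace ℝ (Fin d)) :
    ‖x‖ ^ d * greenKernel 1 0 x ≤ 2 * d * (‖x‖ ^ 2 + 1)⁻¹ := by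
  have hpos : 0 < ‖x‖ ^ 2 + 1 := by positivity
  have hnorm : ‖x‖ ^ d ≤ (‖x‖ ^ 2 + 1) ^ ((d : ℝ) / 2) :=
    calc ‖x‖ ^ d = (‖x‖ ^ 2) ^ ((d : ℝ) / 2) := by
          rw [← rpow_natCast ‖x‖ 2, ← rpow_mul (norm_nonneg _), ← rpow_natCast]
          push_cast
          ring_nf
      _ ≤ (‖x‖ ^ 2 + 1) ^ ((d : ℝ) / 2) := by
          gcongr
          linarith
  calc ‖x‖ ^ d * greenKernel 1 0 x
      = 2 * d * (‖x‖ ^ d * (‖x‖ ^ 2 + 1) ^ (-((d : ℝ) / 2) - 1)) := by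
        simp only [greenKernel, sub_zero, one_pow, mul_one]
        ring
    _ ≤ 2 * d * ((‖x‖ ^ 2 + 1) ^ ((d : ℝ) / 2) * (‖x‖ ^ 2 + 1) ^ (-((d : ℝ) / 2) - 1)) := by
        gcongr
    _ = 2 * d * (‖x‖ ^ 2 + 1)⁻¹ := by
        rw [← rpow_add hpos, ← rpow_neg_one]
        ring_nf

theorem tendsto_norm_pow_mul_greenKernel_one :
    Tendsto (fun x : EuclideanSpace ℝ (Fin d) => ‖x‖ ^ d * greenKernel 1 0 x)
      (Bornology.cobounded _) (𝓝 0) := by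
  have hinv : Tendsto (fun x : EuclideanSpace ℝ (Fin d) => 2 * (d : ℝ) * (‖x‖ ^ 2 + 1)⁻¹)
      (Bornology.cobounded _) (𝓝 (2 * d * 0)) :=
    ((tendsto_atTop_add_const_right _ _ ((tendsto_pow_atTop two_ne_zero).comp
      tendsto_norm_cobounded_atTop)).inv_tendsto_atTop).const_mul _
  rw [mul_zero] at hinv
  exact squeeze_zero (fun x => mul_nonneg (by positivity) (greenKernel_nonneg 1 0 x))
    norm_pow_mul_greenKernel_one_le hinv

theorem tendsto_setIntegral_mul_greenKernel (hd : 1 ≤ d) {x₀ : EuclideanSpace ℝ (Fin d)}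
    {S : Set (EuclideanSpace ℝ (Fin d))} {g : EuclideanSpace ℝ (Fin d) → ℝ} (hS : MeasurableSet S)
    (hx₀ : S ∈ 𝓝 x₀) (hg : IntegrableOn g S) (hgc : ContinuousAt g x₀) :
    Tendsto (fun ε => ∫ x in S, g x * greenKernel ε x₀ x) (𝓝[>] 0)
      (𝓝 ((∫ y, greenKernel 1 (0 : EuclideanSpace ℝ (Fin d)) y) * g x₀)) := by
  set D := ∫ y, greenKernel 1 (0 : EuclideanSpace ℝ (Fin d)) y
  have hD : 0 < D := integral_greenKernel_one_pos hd
  have htail := (tendsto_norm_pow_mul_greenKernel_one (d := d)).const_mul D⁻¹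
  have hlim := tendsto_integral_comp_smul_smul_of_integrable' (μ := volume)
    (φ := fun y => D⁻¹ * greenKernel 1 0 y) (g := S.indicator g) (x₀ := x₀)
    (fun y => mul_nonneg (by positivity) (greenKernel_nonneg 1 0 y))
    (by rw [integral_const_mul, inv_mul_cancel₀ hD.ne'])
    (by simpa only [finrank_euclideanSpace, Fintype.card_fin, mul_zero, mul_left_comm] using htail)
    (hg.integrable_indicator hS)
    (hgc.congr (by filter_upwards [hx₀] with x hx using (indicator_of_mem hx g).symm))
  rw [indicator_of_mem (mem_of_mem_nhds hx₀)] at hlim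
  refine ((hlim.const_mul D).comp tendsto_inv_nhdsGT_zero).congr' ?_
  filter_upwards [self_mem_nhdsWithin] with ε (hε : 0 < ε)
  rw [Function.comp_apply, ← integral_const_mul, ← integral_indicator hS]
  congr 1 with x
  by_cases hx : x ∈ S
  · rw [indicator_of_mem hx, indicator_of_mem hx, ← inv_inv ε,
      greenKernel_inv_eq_pow_mul x₀ x (inv_pos.2 hε)]
    simp only [finrank_euclideanSpace, Fintype.card_fin, smul_eq_mul, inv_inv]
    field_simp
  · rw [indicator_of_notMem hx, indicator_of_notMem hx, smul_zero, mul_zero]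

end ApproximateIdentity

section Green

variable {m T t R ε : ℝ} {Q : Set (ℝ × EuclideanSpace ℝ (Fin d))}
  {K K' : Set (EuclideanSpace ℝ (Fin d))} {w : ℝ → EuclideanSpace ℝ (Fin d) → ℝ}
  {φ : EuclideanSpace ℝ (Fin d) → ℝ} {x₀ : EuclideanSpace ℝ (Fin d)}

/-- The mass of `f` in the ball of radius `2 * R` about `x₀`, weighted by the cutoff of exponent
`p`: the quantity that persists for small times. -/
noncomputable def cutoffMass (p R : ℝ) (x₀ : EuclideanSpace ℝ (Fin d))
    (f : EuclideanSpace ℝ (Fin d) → ℝ) : ℝ :=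
  ∫ x in closedBall x₀ (2 * R), f x * cutoff p R x₀ x

theorem closedBall_two_mul_subset_interior (hR : 0 < R) (x₀ : EuclideanSpace ℝ (Fin d)) :
    closedBall x₀ (2 * R) ⊆ interior (closedBall x₀ (3 * R)) :=
  (closedBall_subset_ball (by linarith)).trans ball_subset_interior_closedBall

theorem IsFDESol.continuousOn_apply (hw : IsFDESol m Q w) (hKQ : ∀ x ∈ K, (t, x) ∈ Q) :
    ContinuousOn (w t) K :=
  hw.2.1.continuousOn.comp (f := fun x => (t, x)) (by fun_prop) hKQ

theorem IsFDESol.setIntegral_timeEnvelope_mul_le (hm0 : 0 ≤ m) (hm1 : m < 1) (hQ : IsOpen Q)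
    (hw : IsFDESol m Q w) (hK : IsCompact K) (hKQ : Icc 0 T ×ˢ K ⊆ Q) (hK' : IsCompact K')
    (hK'K : K' ⊆ K) (hφ : Continuous φ) (hφ0 : ∀ x, 0 ≤ φ x) (ht : t ∈ Icc 0 T) :
    ∫ x in K', timeEnvelope (1 / (1 - m)) w t x * φ x ≤ ∫ x in K', w t x * φ x := by
  have hv := hw.isSupersol_timeEnvelope hm0 hm1 hQ hK hKQ
  refine setIntegral_mono_on
    ((((hv.continuousOn_apply ht).mono hK'K).mul hφ.continuousOn).integrableOn_compact hK')
    (((hw.continuousOn_apply fun x hx => hKQ ⟨ht, hK'K hx⟩).mul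
      hφ.continuousOn).integrableOn_compact hK') hK'.measurableSet fun x hx => ?_
  have hle := timeEnvelope_le (p := 1 / (1 - m)) (fun s hs y hy => hw.1 (s, y) (hKQ ⟨hs, hy⟩)) ht
    (hK'K hx) (⟨one_pos, le_rfl⟩ : (1 : ℝ) ∈ Ioc (0 : ℝ) 1)
  rw [one_rpow, one_mul, one_mul] at hle
  exact mul_le_mul_of_nonneg_right hle (hφ0 x)

theorem IsFDESol.timeEnvelope_rpow_le (hm0 : 0 ≤ m) (hm1 : m < 1) (hQ : IsOpen Q)
    (hw : IsFDESol m Q w) (hK : IsCompact K) (hKQ : Icc 0 T ×ˢ K ⊆ Q) (ht : 0 < t) {τ : ℝ}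
    (htτ : t ≤ τ) (hτ : τ ≤ T) {x : EuclideanSpace ℝ (Fin d)} (hx : x ∈ K) :
    timeEnvelope (1 / (1 - m)) w τ x ^ m ≤ (T / t) ^ (m / (1 - m)) * w t x ^ m := by
  have hv := hw.isSupersol_timeEnvelope hm0 hm1 hQ hK hKQ
  have hτ0 : 0 < τ := ht.trans_le htτ
  have hwt : 0 < w t x := hw.1 (t, x) (hKQ ⟨⟨ht.le, htτ.trans hτ⟩, hx⟩)
  calc timeEnvelope (1 / (1 - m)) w τ x ^ m ≤ ((τ / t) ^ (1 / (1 - m)) * w t x) ^ m :=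
        rpow_le_rpow (hv.pos τ ⟨hτ0.le, hτ⟩ x hx).le
          (timeEnvelope_le_rpow_div_mul (fun s hs y hy => hw.1 (s, y) (hKQ ⟨hs, hy⟩)) hx ht htτ hτ)
          hm0
    _ = (τ / t) ^ (m / (1 - m)) * w t x ^ m := by
        rw [mul_rpow (by positivity) hwt.le, ← rpow_mul (by positivity), one_div_mul_eq_div]
    _ ≤ (T / t) ^ (m / (1 - m)) * w t x ^ m := by
        have := div_nonneg hm0 (sub_nonneg.2 hm1.le)
        gcongr

theorem IsFDESol.setIntegral_timeEnvelope_rpow_mul_le (hm0 : 0 ≤ m) (hm1 : m < 1) (hQ : IsOpen Q)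
    (hw : IsFDESol m Q w) (hK : IsCompact K) (hKQ : Icc 0 T ×ˢ K ⊆ Q) (hK' : IsCompact K')
    (hK'K : K' ⊆ K) (hφ : Continuous φ) (hφ0 : ∀ x, 0 ≤ φ x) (ht : 0 < t) {τ : ℝ} (htτ : t ≤ τ)
    (hτ : τ ≤ T) :
    ∫ x in K', timeEnvelope (1 / (1 - m)) w τ x ^ m * φ x ≤
      (T / t) ^ (m / (1 - m)) * ∫ x in K', w t x ^ m * φ x := by
  have hv := hw.isSupersol_timeEnvelope hm0 hm1 hQ hK hKQ
  have htQ : ∀ x ∈ K', (t, x) ∈ Q := fun x hx => hKQ ⟨⟨ht.le, htτ.trans hτ⟩, hK'K hx⟩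
  rw [← integral_const_mul]
  refine setIntegral_mono_on
    ((((hv.continuousOn_rpow ⟨ht.le.trans htτ, hτ⟩).mono hK'K).mul
      hφ.continuousOn).integrableOn_compact hK')
    (((((hw.continuousOn_apply htQ).rpow_const fun _ _ => Or.inr hm0).mul
      hφ.continuousOn).integrableOn_compact hK').const_mul _) hK'.measurableSet fun x hx => ?_
  rw [← mul_assoc]
  exact mul_le_mul_of_nonneg_right
    (hw.timeEnvelope_rpow_le hm0 hm1 hQ hK hKQ ht htτ hτ (hK'K hx)) (hφ0 x)

theorem IsFDESol.half_cutoffMass_le_timeEnvelope (hm0 : 0 < m) (hm1 : m < 1) (hQ : IsOpen Q)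
    (hw : IsFDESol m Q w) (hR : 0 < R) (hKQ : Icc 0 T ×ˢ closedBall x₀ (3 * R) ⊆ Q)
    (ht : t ∈ Icc 0 T)
    (htΛ : 2 * (1 / (1 - m) * d / R ^ 2) * t ≤
      (cutoffMass (1 / (1 - m)) R x₀ (w 0) / volume.real (closedBall x₀ (2 * R))) ^ (1 - m)) :
    cutoffMass (1 / (1 - m)) R x₀ (w 0) / 2 ≤
      cutoffMass (1 / (1 - m)) R x₀ (timeEnvelope (1 / (1 - m)) w t) := by
  have h1m : 0 < 1 - m := by linarith
  have hv := hw.isSupersol_timeEnvelope hm0.le hm1 hQ (isCompact_closedBall _ _) hKQ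
  have hinit : cutoffMass (1 / (1 - m)) R x₀ (w 0) =
      cutoffMass (1 / (1 - m)) R x₀ (timeEnvelope (1 / (1 - m)) w 0) := by
    refine setIntegral_congr_fun measurableSet_closedBall fun x hx => ?_
    have hpos := hw.1 (0, x) (hKQ ⟨⟨le_rfl, ht.1.trans ht.2⟩,
      closedBall_subset_closedBall (by linarith) hx⟩)
    simp only [timeEnvelope_zero (p := 1 / (1 - m)) (by positivity) hpos.le]
  rw [hinit] at htΛ ⊢
  exact hv.half_integral_le hm0.le hm1.le (isCompact_closedBall _ _) (isCompact_closedBall _ _)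
    (measure_closedBall_pos _ _ (by positivity)).ne' (closedBall_two_mul_subset_interior hR x₀)
    (isTestFunction_cutoff hm0.le ((one_lt_div h1m).2 (by linarith)) (by field_simp; ring) hR)
    (by positivity) ht htΛ

theorem mul_cutoffMass_le_setIntegral_mul_greenFunction {p : ℝ} (hp : 0 < p) (hε : 0 < ε)
    (hεR : ε ≤ R) (hφ : ContinuousOn φ (closedBall x₀ (2 * R)))
    (hφ0 : ∀ x ∈ closedBall x₀ (2 * R), 0 ≤ φ x) :
    R ^ 2 * (4 * R ^ 2) ^ (-((d : ℝ) / 2)) * cutoffMass p R x₀ φ ≤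
      ∫ x in closedBall x₀ (2 * R), φ x * greenFunction R ε x₀ x := by
  have hK := isCompact_closedBall x₀ (2 * R)
  have hcutoff := (continuous_cutoff (p := p) (R := R) (x₀ := x₀) hp.le).continuousOn
    (s := closedBall x₀ (2 * R))
  have hgreen := (continuous_greenFunction (x₀ := x₀) (hε.trans_le hεR) hε).continuousOn
    (s := closedBall x₀ (2 * R))
  rw [cutoffMass, ← integral_const_mul]
  refine setIntegral_mono_on (((hφ.mul hcutoff).integrableOn_compact hK).const_mul _)
    ((hφ.mul hgreen).integrableOn_compact hK) hK.measurableSet fun x hx => ?_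
  rw [mul_left_comm]
  exact mul_le_mul_of_nonneg_left (mul_cutoff_le_greenFunction hp hε hεR) (hφ0 x hx)

theorem IsFDESol.mul_half_cutoffMass_le (hm0 : 0 < m) (hm1 : m < 1) (hQ : IsOpen Q)
    (hw : IsFDESol m Q w) (hKQ : Icc 0 T ×ˢ closedBall x₀ (3 * R) ⊆ Q) (ht : 0 < t) (htT : t ≤ T)
    (hε : 0 < ε) (hεR : ε ≤ R)
    (htΛ : 2 * (1 / (1 - m) * d / R ^ 2) * t ≤
      (cutoffMass (1 / (1 - m)) R x₀ (w 0) / volume.real (closedBall x₀ (2 * R))) ^ (1 - m)) :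
    R ^ 2 * (4 * R ^ 2) ^ (-((d : ℝ) / 2)) * (cutoffMass (1 / (1 - m)) R x₀ (w 0) / 2) ≤
      (∫ x in closedBall x₀ (2 * R), w T x * greenFunction R ε x₀ x) +
        T * ((T / t) ^ (m / (1 - m)) *
          ∫ x in closedBall x₀ (2 * R), w t x ^ m * greenKernel ε x₀ x) := by
  have hR : 0 < R := hε.trans_le hεR
  have hT : 0 < T := ht.trans_le htT
  have hK := isCompact_closedBall x₀ (3 * R)
  have hK' := isCompact_closedBall x₀ (2 * R)
  have hK'K := closedBall_two_mul_subset_interior hR x₀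
  have hsub := hK'K.trans interior_subset
  have hv := hw.isSupersol_timeEnvelope hm0.le hm1 hQ hK hKQ
  have hφ := isTestFunction_greenFunction (x₀ := x₀) hR hε
  set J := ∫ x in closedBall x₀ (2 * R), w t x ^ m * greenKernel ε x₀ x
  have hJ : 0 ≤ J := setIntegral_nonneg hK'.measurableSet fun x hx =>
    mul_nonneg (rpow_nonneg (hw.1 (t, x) (hKQ ⟨⟨ht.le, htT⟩, hsub hx⟩)).le _)
      (greenKernel_nonneg ε x₀ x)
  have hmass := mul_le_mul_of_nonneg_left
    (hw.half_cutoffMass_le_timeEnvelope hm0 hm1 hQ hR hKQ ⟨ht.le, htT⟩ htΛ)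
    (show 0 ≤ R ^ 2 * (4 * R ^ 2) ^ (-((d : ℝ) / 2)) by positivity)
  have hcompare := mul_cutoffMass_le_setIntegral_mul_greenFunction (p := 1 / (1 - m))
    (one_div_pos.2 (sub_pos.2 hm1)) hε hεR
    ((hv.continuousOn_apply ⟨ht.le, htT⟩).mono hsub)
    fun x hx => (hv.pos t ⟨ht.le, htT⟩ x (hsub hx)).le
  have hdecay := hv.integral_sub_mul_le hK hK' hK'K hφ ht.le htT le_rfl
    (c := (T / t) ^ (m / (1 - m)) * J) (by positivity) fun τ hτ _ =>
      hw.setIntegral_timeEnvelope_rpow_mul_le hm0.le hm1 hQ hK hKQ hK' hsub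
        (continuous_greenKernel hε) (greenKernel_nonneg ε x₀) ht hτ.1.le hτ.2
  have hend := hw.setIntegral_timeEnvelope_mul_le hm0.le hm1 hQ hK hKQ hK' hsub hφ.continuous
    hφ.nonneg ⟨hT.le, le_rfl⟩
  have hloss : (T / t) ^ (m / (1 - m)) * J * (T - t) ≤ T * ((T / t) ^ (m / (1 - m)) * J) := by
    rw [mul_comm T]
    gcongr
    linarith
  linarith

end Green

section Extinction

variable {m T s t R ε : ℝ} {Ω K : Set (EuclideanSpace ℝ (Fin d))}
  {u : ℝ → EuclideanSpace ℝ (Fin d) → ℝ} {u₀ φ : EuclideanSpace ℝ (Fin d) → ℝ}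
  {x₀ : EuclideanSpace ℝ (Fin d)}

theorem TakesInit.tendsto_setIntegral_mul (hi : TakesInit T Ω u u₀) (hT : 0 < T)
    (hK : IsCompact K) (hKΩ : K ⊆ Ω) (hφ : Continuous φ) :
    Tendsto (fun s => ∫ x in K, u s x * φ x) (𝓝[>] 0) (𝓝 (∫ x in K, u₀ x * φ x)) := by
  have hcont : ContinuousOn (fun s => ∫ x in K, u s x * φ x) (Icc 0 (T / 2)) :=
    continuousOn_setIntegral_of_isCompact isCompact_Icc hK hK.measurableSet
      ((hi.1.mono (prod_mono (fun s hs => ⟨hs.1, by linarith [hs.2]⟩) hKΩ)).mul (by fun_prop))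
  have hzero : ∫ x in K, u 0 x * φ x = ∫ x in K, u₀ x * φ x :=
    setIntegral_congr_fun hK.measurableSet fun x hx => by simp only [hi.2 x (hKΩ hx)]
  rw [← hzero, ← nhdsWithin_Ioo_eq_nhdsGT (half_pos hT)]
  exact (hcont 0 ⟨le_rfl, (half_pos hT).le⟩).mono Ioo_subset_Icc_self

theorem ExtinctAt.tendsto_setIntegral_mul (he : ExtinctAt T Ω u) (hT : 0 < T) (hK : IsCompact K)
    (hKΩ : K ⊆ Ω) (hφ : Continuous φ) :
    Tendsto (fun s => ∫ x in K, u s x * φ x) (𝓝[<] T) (𝓝 0) := by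
  have hcont : ContinuousOn (fun s => ∫ x in K, u s x * φ x) (Icc (T / 2) T) :=
    continuousOn_setIntegral_of_isCompact isCompact_Icc hK hK.measurableSet
      ((he.1.mono (prod_mono (fun s hs => ⟨by linarith [hs.1], hs.2⟩) hKΩ)).mul (by fun_prop))
  have hzero : ∫ x in K, u T x * φ x = 0 :=
    setIntegral_eq_zero_of_forall_eq_zero fun x hx => by rw [he.2.1 x (hKΩ hx), zero_mul]
  rw [← hzero, ← nhdsWithin_Ioo_eq_nhdsLT (half_lt_self hT)]
  exact (hcont T ⟨(half_lt_self hT).le, le_rfl⟩).mono Ioo_subset_Icc_self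

theorem isOpen_preimage_add_left_Ioo_prod (hΩ : IsOpen Ω) (s : ℝ) :
    IsOpen ((fun p : ℝ × EuclideanSpace ℝ (Fin d) => (s + p.1, p.2)) ⁻¹' (Ioo 0 T ×ˢ Ω)) :=
  (isOpen_Ioo.prod hΩ).preimage (by fun_prop)

theorem Icc_prod_subset_preimage_add_left {τ : ℝ} (hs : 0 < s) (hτ : s + τ < T) (hK : K ⊆ Ω) :
    Icc 0 τ ×ˢ K ⊆
      (fun p : ℝ × EuclideanSpace ℝ (Fin d) => (s + p.1, p.2)) ⁻¹' (Ioo 0 T ×ˢ Ω) :=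
  fun _ hp => ⟨⟨by linarith [hp.1.1], by linarith [hp.1.2]⟩, hK hp.2⟩

theorem IsFDESol.half_cutoffMass_le (hu : IsFDESol m (Ioo 0 T ×ˢ Ω) u) (hm0 : 0 < m) (hm1 : m < 1)
    (hΩ : IsOpen Ω) (hR : 0 < R) (hball : closedBall x₀ (3 * R) ⊆ Ω) (hs : 0 < s) (ht : 0 ≤ t)
    (htT : s + t < T)
    (htΛ : 2 * (1 / (1 - m) * d / R ^ 2) * t ≤
      (cutoffMass (1 / (1 - m)) R x₀ (u s) / volume.real (closedBall x₀ (2 * R))) ^ (1 - m)) :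
    cutoffMass (1 / (1 - m)) R x₀ (u s) / 2 ≤ cutoffMass (1 / (1 - m)) R x₀ (u (s + t)) := by
  have hQ := isOpen_preimage_add_left_Ioo_prod (T := T) hΩ s
  have hKQ := Icc_prod_subset_preimage_add_left hs htT hball
  have hpersist := (hu.comp_add_left s).half_cutoffMass_le_timeEnvelope hm0 hm1 hQ hR hKQ
    ⟨ht, le_rfl⟩ (by rwa [add_zero])
  rw [add_zero] at hpersist
  exact hpersist.trans ((hu.comp_add_left s).setIntegral_timeEnvelope_mul_le hm0.le hm1 hQ
    (isCompact_closedBall _ _) hKQ (isCompact_closedBall _ _)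
    (closedBall_subset_closedBall (by linarith))
    (continuous_cutoff (one_div_nonneg.2 (sub_nonneg.2 hm1.le))) (fun _ => cutoff_nonneg)
    ⟨ht, le_rfl⟩)

theorem ExtinctAt.rpow_cutoffMass_div_le (he : ExtinctAt T Ω u) (hi : TakesInit T Ω u u₀)
    (hu : IsFDESol m (Ioo 0 T ×ˢ Ω) u) (hm0 : 0 < m) (hm1 : m < 1) (hT : 0 < T) (hΩ : IsOpen Ω)
    (hR : 0 < R) (hball : closedBall x₀ (3 * R) ⊆ Ω)
    (hmass : 0 < cutoffMass (1 / (1 - m)) R x₀ u₀) :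
    (cutoffMass (1 / (1 - m)) R x₀ u₀ / volume.real (closedBall x₀ (2 * R))) ^ (1 - m) ≤
      2 * (1 / (1 - m) * d / R ^ 2) * T := by
  have h1m : 0 < 1 - m := sub_pos.2 hm1
  have hK := isCompact_closedBall x₀ (2 * R)
  have hKΩ : closedBall x₀ (2 * R) ⊆ Ω :=
    (closedBall_subset_closedBall (by linarith)).trans hball
  have hcutoff := continuous_cutoff (R := R) (x₀ := x₀) (one_div_nonneg.2 h1m.le)
  have hinit : Tendsto (fun s => cutoffMass (1 / (1 - m)) R x₀ (u s)) (𝓝[>] 0)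
      (𝓝 (cutoffMass (1 / (1 - m)) R x₀ u₀)) := hi.tendsto_setIntegral_mul hT hK hKΩ hcutoff
  have hfinal : Tendsto (fun s => cutoffMass (1 / (1 - m)) R x₀ (u s)) (𝓝[<] T) (𝓝 0) :=
    he.tendsto_setIntegral_mul hT hK hKΩ hcutoff
  refine le_of_tendsto ((hinit.div_const _).rpow_const (Or.inr h1m.le)) ?_
  filter_upwards [hinit.eventually (lt_mem_nhds hmass), Ioo_mem_nhdsGT hT] with s hs hsT
  by_contra! hlarge
  have hhalf : cutoffMass (1 / (1 - m)) R x₀ (u s) / 2 ≤ 0 := by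
    refine ge_of_tendsto hfinal ?_
    filter_upwards [Ioo_mem_nhdsLT hsT.2] with s' hs'
    have hdelay : 2 * (1 / (1 - m) * d / R ^ 2) * (s' - s) ≤
        2 * (1 / (1 - m) * d / R ^ 2) * T := by
      gcongr
      linarith [hs'.2, hsT.1]
    have hpersist := hu.half_cutoffMass_le hm0 hm1 hΩ hR hball hsT.1 (sub_nonneg.2 hs'.1.le)
      (by linarith [hs'.2]) (hdelay.trans hlarge.le)
    rwa [add_sub_cancel] at hpersist
  linarith

theorem ExtinctAt.mul_half_cutoffMass_le_mul_setIntegral (he : ExtinctAt T Ω u)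
    (hu : IsFDESol m (Ioo 0 T ×ˢ Ω) u) (hm0 : 0 < m) (hm1 : m < 1) (hΩ : IsOpen Ω)
    (hball : closedBall x₀ (3 * R) ⊆ Ω) (hs : 0 < s) (ht : 0 < t) (htT : s + t < T) (hε : 0 < ε)
    (hεR : ε ≤ R)
    (htΛ : 2 * (1 / (1 - m) * d / R ^ 2) * t ≤
      (cutoffMass (1 / (1 - m)) R x₀ (u s) / volume.real (closedBall x₀ (2 * R))) ^ (1 - m)) :
    R ^ 2 * (4 * R ^ 2) ^ (-((d : ℝ) / 2)) * (cutoffMass (1 / (1 - m)) R x₀ (u s) / 2) ≤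
      T * ((T / t) ^ (m / (1 - m)) *
        ∫ x in closedBall x₀ (2 * R), u (s + t) x ^ m * greenKernel ε x₀ x) := by
  have hR : 0 < R := hε.trans_le hεR
  have hT : 0 < T := by linarith
  have hKΩ : closedBall x₀ (2 * R) ⊆ Ω :=
    (closedBall_subset_closedBall (by linarith)).trans hball
  set J := ∫ x in closedBall x₀ (2 * R), u (s + t) x ^ m * greenKernel ε x₀ x
  have hJ : 0 ≤ J := setIntegral_nonneg measurableSet_closedBall fun x hx =>
    mul_nonneg (rpow_nonneg (hu.1 (s + t, x) ⟨⟨by linarith, htT⟩, hKΩ hx⟩).le _)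
      (greenKernel_nonneg ε x₀ x)
  have hfinal := (he.tendsto_setIntegral_mul hT (isCompact_closedBall x₀ (2 * R)) hKΩ
    (continuous_greenFunction (x₀ := x₀) hR hε)).add_const (T * ((T / t) ^ (m / (1 - m)) * J))
  rw [zero_add] at hfinal
  refine ge_of_tendsto hfinal ?_
  filter_upwards [Ioo_mem_nhdsLT htT] with s' hs'
  have hgreen := (hu.comp_add_left s).mul_half_cutoffMass_le hm0 hm1
    (isOpen_preimage_add_left_Ioo_prod hΩ s)
    (Icc_prod_subset_preimage_add_left (τ := s' - s) hs (by linarith [hs'.2]) hball) ht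
    (by linarith [hs'.1]) hε hεR (by rwa [add_zero])
  rw [add_zero, add_sub_cancel] at hgreen
  have hlength : (s' - s) * (((s' - s) / t) ^ (m / (1 - m)) * J) ≤
      T * ((T / t) ^ (m / (1 - m)) * J) := by
    have := div_nonneg hm0.le (sub_nonneg.2 hm1.le)
    have hpos : 0 ≤ s' - s := by linarith [hs'.1]
    have hle : s' - s ≤ T := by linarith [hs'.2]
    gcongr
  linarith

theorem ExtinctAt.mul_half_cutoffMass_le_add (he : ExtinctAt T Ω u)
    (hu : IsFDESol m (Ioo 0 T ×ˢ Ω) u) (hd : 1 ≤ d) (hm0 : 0 < m) (hm1 : m < 1) (hΩ : IsOpen Ω)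
    (hR : 0 < R) (hball : closedBall x₀ (3 * R) ⊆ Ω) (hs : 0 < s) (ht : 0 < t) (htT : s + t < T)
    (htΛ : 2 * (1 / (1 - m) * d / R ^ 2) * t ≤
      (cutoffMass (1 / (1 - m)) R x₀ (u s) / volume.real (closedBall x₀ (2 * R))) ^ (1 - m)) :
    R ^ 2 * (4 * R ^ 2) ^ (-((d : ℝ) / 2)) * (cutoffMass (1 / (1 - m)) R x₀ (u s) / 2) ≤
      T * ((T / t) ^ (m / (1 - m)) *
        ((∫ y, greenKernel 1 (0 : EuclideanSpace ℝ (Fin d)) y) * u (s + t) x₀ ^ m)) := by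
  have hKΩ : closedBall x₀ (2 * R) ⊆ Ω :=
    (closedBall_subset_closedBall (by linarith)).trans hball
  have hnhds : closedBall x₀ (2 * R) ∈ 𝓝 x₀ := closedBall_mem_nhds x₀ (by linarith)
  have hcont : ContinuousOn (fun x => u (s + t) x ^ m) (closedBall x₀ (2 * R)) :=
    (hu.continuousOn_apply fun x hx => ⟨⟨by linarith, htT⟩, hKΩ hx⟩).rpow_const
      fun _ _ => Or.inr hm0.le
  have hlim := tendsto_setIntegral_mul_greenKernel hd measurableSet_closedBall hnhds
    (hcont.integrableOn_compact (isCompact_closedBall _ _)) (hcont.continuousAt hnhds)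
  refine ge_of_tendsto ((hlim.const_mul _).const_mul _) ?_
  filter_upwards [Ioc_mem_nhdsGT hR] with ε hε
  exact he.mul_half_cutoffMass_le_mul_setIntegral hu hm0 hm1 hΩ hball hs ht htT hε.1 hε.2 htΛ

theorem ExtinctAt.mul_half_cutoffMass_init_le (he : ExtinctAt T Ω u) (hi : TakesInit T Ω u u₀)
    (hu : IsFDESol m (Ioo 0 T ×ˢ Ω) u) (hd : 1 ≤ d) (hm0 : 0 < m) (hm1 : m < 1) (hΩ : IsOpen Ω)
    (hR : 0 < R) (hball : closedBall x₀ (3 * R) ⊆ Ω) (ht : 0 < t) (htT : t < T)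
    (htΛ : 2 * (1 / (1 - m) * d / R ^ 2) * t <
      (cutoffMass (1 / (1 - m)) R x₀ u₀ / volume.real (closedBall x₀ (2 * R))) ^ (1 - m)) :
    R ^ 2 * (4 * R ^ 2) ^ (-((d : ℝ) / 2)) * (cutoffMass (1 / (1 - m)) R x₀ u₀ / 2) ≤
      T * ((T / t) ^ (m / (1 - m)) *
        ((∫ y, greenKernel 1 (0 : EuclideanSpace ℝ (Fin d)) y) * u t x₀ ^ m)) := by
  have h1m : 0 ≤ 1 - m := sub_nonneg.2 hm1.le
  have hinit : Tendsto (fun s => cutoffMass (1 / (1 - m)) R x₀ (u s)) (𝓝[>] 0)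
      (𝓝 (cutoffMass (1 / (1 - m)) R x₀ u₀)) :=
    hi.tendsto_setIntegral_mul (ht.trans htT) (isCompact_closedBall _ _)
      ((closedBall_subset_closedBall (by linarith)).trans hball)
      (continuous_cutoff (one_div_nonneg.2 h1m))
  have hpoint : Tendsto (fun s => u (s + t) x₀) (𝓝[>] 0) (𝓝 (u t x₀)) := by
    have hut : ContinuousAt (fun p : ℝ × EuclideanSpace ℝ (Fin d) => u p.1 p.2) (t, x₀) :=
      hu.2.1.continuousOn.continuousAt ((isOpen_Ioo.prod hΩ).mem_nhds
        ⟨⟨ht, htT⟩, hball (mem_closedBall_self (by positivity))⟩)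
    have hshift : Tendsto (fun s : ℝ => (s + t, x₀)) (𝓝[>] 0) (𝓝 (t, x₀)) :=
      tendsto_nhdsWithin_of_tendsto_nhds (Continuous.tendsto' (by fun_prop) _ _ (by simp))
    exact hut.tendsto.comp hshift
  refine le_of_tendsto_of_tendsto ((hinit.div_const 2).const_mul _)
    ((((hpoint.rpow_const (p := m) (Or.inr hm0.le)).const_mul _).const_mul _).const_mul _) ?_
  filter_upwards [((hinit.div_const _).rpow_const (Or.inr h1m)).eventually (lt_mem_nhds htΛ),
    Ioo_mem_nhdsGT (sub_pos.2 htT)] with s hsΛ hs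
  exact he.mul_half_cutoffMass_le_add hu hd hm0 hm1 hΩ hR hball hs.1 ht (by linarith [hs.2])
    hsΛ.le

end Extinction

section Constants

variable {m R t T I J : ℝ} {x₀ : EuclideanSpace ℝ (Fin d)}
  {f : EuclideanSpace ℝ (Fin d) → ℝ}

theorem rpow_mul_setIntegral_ball_le_cutoffMass {p : ℝ} (hp : 0 ≤ p) (hR : 0 < R)
    (hf : ContinuousOn f (closedBall x₀ (2 * R))) (hf0 : ∀ x ∈ closedBall x₀ (2 * R), 0 ≤ f x) :
    (1 / 2) ^ p * ∫ x in ball x₀ R, f x ≤ cutoffMass p R x₀ f := by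
  have hsub : ball x₀ R ⊆ closedBall x₀ (2 * R) :=
    ball_subset_closedBall.trans (closedBall_subset_closedBall (by linarith))
  have hint : IntegrableOn (fun x => f x * cutoff p R x₀ x) (closedBall x₀ (2 * R)) :=
    (hf.mul (continuous_cutoff hp).continuousOn).integrableOn_compact (isCompact_closedBall _ _)
  have hf_int : IntegrableOn f (closedBall x₀ (2 * R)) :=
    hf.integrableOn_compact (isCompact_closedBall _ _)
  calc (1 / 2) ^ p * ∫ x in ball x₀ R, f x = ∫ x in ball x₀ R, f x * (1 / 2) ^ p := by
        rw [integral_mul_const, mul_comm]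
    _ ≤ ∫ x in ball x₀ R, f x * cutoff p R x₀ x :=
        setIntegral_mono_on ((hf_int.mono_set hsub).mul_const _) (hint.mono_set hsub)
          measurableSet_ball fun x hx =>
            mul_le_mul_of_nonneg_left (rpow_one_half_le_cutoff hp hR hx) (hf0 x (hsub hx))
    _ ≤ cutoffMass p R x₀ f :=
        setIntegral_mono_set hint (ae_restrict_of_forall_mem measurableSet_closedBall fun x hx =>
          mul_nonneg (hf0 x hx) cutoff_nonneg) hsub.eventuallyLE

/-- The constant `c₀'` of the critical time. The volume of the ball of radius `2` enters through
the mean density of the mass, and `8 * d / (1 - m)` is four times the decay rate `2 * d / (1 - m)`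
of the mass weighted by the cutoff. -/
noncomputable def criticalTimeConst (d : ℕ) (m : ℝ) : ℝ :=
  (1 - m) / (8 * d) * (volume.real (closedBall (0 : EuclideanSpace ℝ (Fin d)) 2))⁻¹ ^ (1 - m)

/-- The constant `C₁'` of the pointwise lower bound. -/
noncomputable def positivityConst (d : ℕ) (m : ℝ) : ℝ :=
  (1 / 2) ^ (1 / (1 - m)) / (2 * 2 ^ d * ∫ y, greenKernel 1 (0 : EuclideanSpace ℝ (Fin d)) y)

theorem volume_real_closedBall_pos (x₀ : EuclideanSpace ℝ (Fin d)) (hR : 0 < R) :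
    0 < volume.real (closedBall x₀ R) :=
  ENNReal.toReal_pos (measure_closedBall_pos _ _ hR).ne' measure_closedBall_lt_top.ne

theorem criticalTimeConst_pos (hd : 1 ≤ d) (hm1 : m < 1) : 0 < criticalTimeConst d m := by
  have := sub_pos.2 hm1
  have := volume_real_closedBall_pos (0 : EuclideanSpace ℝ (Fin d)) two_pos
  unfold criticalTimeConst
  positivity

theorem positivityConst_pos (hd : 1 ≤ d) (m : ℝ) : 0 < positivityConst d m := by
  have := integral_greenKernel_one_pos hd
  unfold positivityConst
  positivity

theorem two_mul_mul_criticalTime_eq (hd : 1 ≤ d) (hm1 : m < 1) (hR : 0 < R) (hI : 0 ≤ I)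
    (x₀ : EuclideanSpace ℝ (Fin d)) :
    2 * (1 / (1 - m) * d / R ^ 2) *
        (criticalTimeConst d m * R ^ (2 - d * (1 - m)) * I ^ (1 - m)) =
      (I / volume.real (closedBall x₀ (2 * R))) ^ (1 - m) / 4 := by
  have h1m : 1 - m ≠ 0 := (sub_pos.2 hm1).ne'
  have hvol := volume_real_closedBall_pos (0 : EuclideanSpace ℝ (Fin d)) two_pos
  have hpow : R ^ (2 - d * (1 - m)) = R ^ 2 * (R ^ d)⁻¹ ^ (1 - m) := by
    rw [rpow_sub hR, rpow_two, rpow_mul hR.le, rpow_natCast, inv_rpow (by positivity),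
      div_eq_mul_inv]
  have hscale : volume.real (closedBall x₀ (2 * R)) =
      R ^ d * volume.real (closedBall (0 : EuclideanSpace ℝ (Fin d)) 2) := by
    rw [measureReal_def, mul_comm, Measure.addHaar_closedBall_mul _ _ hR.le zero_le_two,
      ENNReal.toReal_mul, ENNReal.toReal_ofReal (by positivity), finrank_euclideanSpace_fin,
      measureReal_def]
  have hdensity : (I / volume.real (closedBall x₀ (2 * R))) ^ (1 - m) =
      (volume.real (closedBall (0 : EuclideanSpace ℝ (Fin d)) 2))⁻¹ ^ (1 - m) *
        (R ^ d)⁻¹ ^ (1 - m) * I ^ (1 - m) := by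
    rw [hscale, ← mul_rpow (by positivity) (by positivity), ← mul_rpow (by positivity) hI,
      ← mul_inv, mul_comm (R ^ d), div_eq_inv_mul]
  rw [hpow, hdensity, criticalTimeConst]
  field_simp
  ring

theorem two_mul_mul_lt_rpow_of_le_criticalTime (hd : 1 ≤ d) (hm1 : m < 1) (hR : 0 < R)
    (hI : 0 < I) (hIJ : (1 / 2) ^ (1 / (1 - m)) * I ≤ J)
    (ht : t ≤ criticalTimeConst d m * R ^ (2 - d * (1 - m)) * I ^ (1 - m)) :
    2 * (1 / (1 - m) * d / R ^ 2) * t <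
      (J / volume.real (closedBall x₀ (2 * R))) ^ (1 - m) := by
  have h1m : 0 < 1 - m := sub_pos.2 hm1
  have hvol := volume_real_closedBall_pos x₀ (mul_pos two_pos hR)
  have hdensity : 0 < (I / volume.real (closedBall x₀ (2 * R))) ^ (1 - m) := by positivity
  calc 2 * (1 / (1 - m) * d / R ^ 2) * t
      ≤ 2 * (1 / (1 - m) * d / R ^ 2) *
          (criticalTimeConst d m * R ^ (2 - d * (1 - m)) * I ^ (1 - m)) := by gcongr
    _ = (I / volume.real (closedBall x₀ (2 * R))) ^ (1 - m) / 4 :=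
        two_mul_mul_criticalTime_eq hd hm1 hR hI.le x₀
    _ < 1 / 2 * (I / volume.real (closedBall x₀ (2 * R))) ^ (1 - m) := by linarith
    _ = ((1 / 2) ^ (1 / (1 - m)) * I / volume.real (closedBall x₀ (2 * R))) ^ (1 - m) := by
        rw [mul_div_assoc, mul_rpow (by positivity) (by positivity), ← rpow_mul (by positivity),
          one_div_mul_cancel h1m.ne', rpow_one]
    _ ≤ (J / volume.real (closedBall x₀ (2 * R))) ^ (1 - m) := by gcongr

theorem sq_mul_rpow_neg_half (hR : 0 < R) (d : ℕ) :
    R ^ 2 * (4 * R ^ 2) ^ (-((d : ℝ) / 2)) = R ^ (2 - (d : ℝ)) / 2 ^ d := by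
  rw [show 4 * R ^ 2 = (2 * R) ^ (2 : ℝ) by rw [rpow_two]; ring, ← rpow_mul (by positivity),
    show 2 * -((d : ℝ) / 2) = -d by ring, rpow_neg (by positivity), rpow_natCast, mul_pow,
    rpow_sub hR, rpow_two, rpow_natCast]
  field_simp

theorem mul_div_rpow_mul_rpow_neg (hm1 : m < 1) (hT : 0 < T) (ht : 0 < t) :
    T * (T / t) ^ (m / (1 - m)) * (T ^ (-(1 / (1 - m))) * t ^ (m / (1 - m))) = 1 := by
  have h1m : 1 - m ≠ 0 := (sub_pos.2 hm1).ne'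
  have hexp : -(1 / (1 - m)) = -(m / (1 - m)) + -1 := by
    field_simp
    ring
  rw [hexp, rpow_add hT, rpow_neg hT.le, rpow_neg_one, div_rpow hT.le ht.le]
  field_simp

theorem positivityConst_mul_le {A : ℝ} (hd : 1 ≤ d) (hm1 : m < 1) (hR : 0 < R) (hT : 0 < T)
    (ht : 0 < t) (hIJ : (1 / 2) ^ (1 / (1 - m)) * I ≤ J)
    (hJ : R ^ 2 * (4 * R ^ 2) ^ (-((d : ℝ) / 2)) * (J / 2) ≤
      T * ((T / t) ^ (m / (1 - m)) *
        ((∫ y, greenKernel 1 (0 : EuclideanSpace ℝ (Fin d)) y) * A))) :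
    positivityConst d m * R ^ (2 - (d : ℝ)) * I * T ^ (-(1 / (1 - m))) * t ^ (m / (1 - m)) ≤
      A := by
  have hD := integral_greenKernel_one_pos hd
  rw [sq_mul_rpow_neg_half hR] at hJ
  rw [positivityConst]
  set D := ∫ y, greenKernel 1 (0 : EuclideanSpace ℝ (Fin d)) y
  set W := T ^ (-(1 / (1 - m))) * t ^ (m / (1 - m)) with hW
  calc (1 / 2) ^ (1 / (1 - m)) / (2 * 2 ^ d * D) * R ^ (2 - (d : ℝ)) * I *
          T ^ (-(1 / (1 - m))) * t ^ (m / (1 - m))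
      = R ^ (2 - (d : ℝ)) / 2 ^ d * ((1 / 2) ^ (1 / (1 - m)) * I / 2) * (W / D) := by
        rw [hW]
        field_simp
    _ ≤ R ^ (2 - (d : ℝ)) / 2 ^ d * (J / 2) * (W / D) := by gcongr
    _ ≤ T * ((T / t) ^ (m / (1 - m)) * (D * A)) * (W / D) := by gcongr
    _ = T * (T / t) ^ (m / (1 - m)) * W * A := by field_simp
    _ = A := by rw [mul_div_rpow_mul_rpow_neg hm1 hT ht, one_mul]

theorem TakesInit.continuousOn_init {Ω : Set (EuclideanSpace ℝ (Fin d))}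
    {u : ℝ → EuclideanSpace ℝ (Fin d) → ℝ} (hi : TakesInit T Ω u f) (hT : 0 < T) :
    ContinuousOn f Ω :=
  (hi.1.comp (f := fun x => ((0 : ℝ), x)) (by fun_prop)
    fun _ hx => ⟨⟨le_rfl, hT⟩, hx⟩).congr fun x hx => (hi.2 x hx).symm

end Constants

end FastDiffusion

/-- **Theorem 1.1, second part: quantitative positivity for small times.** -/
theorem fde_positivity_small_times
    (d : ℕ) (hd : 1 ≤ d) (m : ℝ) (hm0 : 0 < m) (hm1 : m < 1) :
    ∃ c₀' C₁' : ℝ, 0 < c₀' ∧ 0 < C₁' ∧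
      ∀ (Ω : Set (EuclideanSpace ℝ (Fin d))), IsOpen Ω →
      ∀ (u : ℝ → EuclideanSpace ℝ (Fin d) → ℝ) (u₀ : EuclideanSpace ℝ (Fin d) → ℝ) (T : ℝ),
        0 < T →
        IsFDESol m (Ioo 0 T ×ˢ Ω) u →
        (∀ x ∈ Ω, 0 ≤ u₀ x) →
        LocallyIntegrableOn u₀ Ω →
        TakesInit T Ω u u₀ →
        ExtinctAt T Ω u →
      ∀ (x₀ : EuclideanSpace ℝ (Fin d)) (R : ℝ), 0 < R →
        closedBall x₀ (3 * R) ⊆ Ω →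
        c₀' * R ^ (2 - d * (1 - m)) * (∫ x in ball x₀ R, u₀ x) ^ (1 - m) ≤ T ∧
        ∀ t : ℝ, 0 < t →
          t ≤ c₀' * R ^ (2 - d * (1 - m)) * (∫ x in ball x₀ R, u₀ x) ^ (1 - m) →
          u t x₀ ^ m ≥
            C₁' * R ^ (2 - (d : ℝ)) * (∫ x in ball x₀ R, u₀ x) *
              T ^ (-(1 / (1 - m))) * t ^ (m / (1 - m)) := by
  refine ⟨criticalTimeConst d m, positivityConst d m, criticalTimeConst_pos hd hm1,
    positivityConst_pos hd m, ?_⟩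
  intro Ω hΩ u u₀ T hT hu hu₀ _ hi he x₀ R hR hball
  have hKΩ : closedBall x₀ (2 * R) ⊆ Ω :=
    (closedBall_subset_closedBall (by linarith)).trans hball
  have hI : 0 ≤ ∫ x in ball x₀ R, u₀ x := setIntegral_nonneg measurableSet_ball fun x hx =>
    hu₀ x (hKΩ (closedBall_subset_closedBall (by linarith) (ball_subset_closedBall hx)))
  have hexp : 0 < 1 / (1 - m) := one_div_pos.2 (sub_pos.2 hm1)
  have hmass := rpow_mul_setIntegral_ball_le_cutoffMass hexp.le hR
    ((hi.continuousOn_init hT).mono hKΩ) fun x hx => hu₀ x (hKΩ hx)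
  set I := ∫ x in ball x₀ R, u₀ x
  rcases hI.eq_or_lt with hI | hI
  · rw [← hI, zero_rpow (sub_pos.2 hm1).ne', mul_zero]
    exact ⟨hT.le, fun t ht hle => absurd ht hle.not_gt⟩
  have hsmall := fun t => two_mul_mul_lt_rpow_of_le_criticalTime (t := t) (x₀ := x₀) hd hm1 hR hI
    hmass
  have hextinct := he.rpow_cutoffMass_div_le hi hu hm0 hm1 hT hΩ hR hball
    (lt_of_lt_of_le (by positivity) hmass)
  have hlt := fun t ht => lt_of_mul_lt_mul_left ((hsmall t ht).trans_le hextinct) (by positivity)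
  exact ⟨(hlt _ le_rfl).le, fun t ht hle => positivityConst_mul_le hd hm1 hR hT ht hmass
    (he.mul_half_cutoffMass_init_le hi hu hd hm0 hm1 hΩ hR hball ht (hlt t hle) (hsmall t hle))⟩
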